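/- arXiv:2208.13890 — 2 statements merged into one kernel-verified Lean document; each statement's English description precedes it below -/
import Mathlib

section
/- The fundamental group of a closed surface is not isomorphic to a free product of two non-trivial groups. -/
open Topology Filter Set

namespace AlexanderSpanier

variable {X Y : Type*} [TopologicalSpace X] [TopologicalSpace Y]

/-- A `1`-cochain on `X` with coefficients in `ZMod 2`. -/
abbrev Cochain (X : Type*) := X → X → ZMod 2

/-- The coboundary of a function. -/
def cobd {X : Type*} (u : X → ZMod 2) : Cochain X := fun a b => u a + u b

/-- The pullback of a cochain. -/
def pull {X Y : Type*} (f : X → Y) (m : Cochain Y) : Cochain X := fun a b => m (f a) (f b)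

/-- The germ of `m` at `y` vanishes. -/
def ZeroAt (m : Cochain X) (y : X) : Prop := ∀ᶠ p : X × X in 𝓝 (y, y), m p.1 p.2 = 0

/-- The germ of `m` at `y` is a coboundary. -/
def ClosedAt (m : Cochain X) (y : X) : Prop := ∃ u, ZeroAt (m + cobd u) y

/-- `m` is a coboundary on a punctured neighbourhood of `x`. -/
def ResTriv (m : Cochain X) (x : X) : Prop := ∃ u, ∀ᶠ y in 𝓝[≠] x, ZeroAt (m + cobd u) y

theorem add_self_cochain {X : Type*} (m : Cochain X) : m + m = 0 := by
  ext; simp [CharTwo.add_self_eq_zero]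

theorem cobd_add {X : Type*} (u v : X → ZMod 2) : cobd (u + v) = cobd u + cobd v := by
  ext a b; simp [cobd]; ring

theorem cobd_zero {X : Type*} : cobd (0 : X → ZMod 2) = 0 := by
  ext a b; simp [cobd]

theorem pull_add {X Y : Type*} (f : X → Y) (m n : Cochain Y) :
    pull f (m + n) = pull f m + pull f n := rfl

theorem pull_cobd {X Y : Type*} (f : X → Y) (u : Y → ZMod 2) :
    pull f (cobd u) = cobd (u ∘ f) := rfl

theorem zeroAt_iff {m : Cochain X} {y : X} :
    ZeroAt m y ↔ ∃ W, IsOpen W ∧ y ∈ W ∧ ∀ a ∈ W, ∀ b ∈ W, m a b = 0 := by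
  constructor
  · intro h
    rw [ZeroAt, nhds_prod_eq] at h
    obtain ⟨s, hs, t, ht, hst⟩ := eventually_prod_iff.1 h
    obtain ⟨W, hW, hWo, hy⟩ := mem_nhds_iff.1 (hs.and ht)
    exact ⟨W, hWo, hy, fun a ha b hb => hst (hW ha).1 (hW hb).2⟩
  · rintro ⟨W, hW, hy, h⟩
    have : W ×ˢ W ∈ 𝓝 (y, y) := prod_mem_nhds (hW.mem_nhds hy) (hW.mem_nhds hy)
    filter_upwards [this] with p hp using h _ hp.1 _ hp.2

theorem zeroAt_of_mem_nhds {m : Cochain X} {y : X} {W : Set X} (hW : W ∈ 𝓝 y)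
    (h : ∀ a ∈ W, ∀ b ∈ W, m a b = 0) : ZeroAt m y := by
  filter_upwards [prod_mem_nhds hW hW] with p hp using h _ hp.1 _ hp.2

theorem zeroAt_zero (y : X) : ZeroAt (0 : Cochain X) y := Eventually.of_forall fun _ => rfl

theorem ZeroAt.add {m n : Cochain X} {y : X} (hm : ZeroAt m y) (hn : ZeroAt n y) :
    ZeroAt (m + n) y := by
  filter_upwards [hm, hn] with p h1 h2
  simp [h1, h2]

theorem ZeroAt.eventually {m : Cochain X} {y : X} (hm : ZeroAt m y) :
    ∀ᶠ z in 𝓝 y, ZeroAt m z := by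
  obtain ⟨W, hW, hy, h⟩ := zeroAt_iff.1 hm
  filter_upwards [hW.mem_nhds hy] with z hz using zeroAt_iff.2 ⟨W, hW, hz, h⟩

theorem isOpen_zeroAt (m : Cochain X) : IsOpen {y | ZeroAt m y} :=
  isOpen_iff_mem_nhds.2 fun _ h => ZeroAt.eventually h

theorem ZeroAt.congr_set {m n : Cochain X} {y : X} (hm : ZeroAt m y) {W : Set X} (hW : W ∈ 𝓝 y)
    (h : ∀ a ∈ W, ∀ b ∈ W, n a b = m a b) : ZeroAt n y := by
  filter_upwards [hm, prod_mem_nhds hW hW] with p h1 h2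
  rw [h _ h2.1 _ h2.2, h1]

theorem ZeroAt.pull {f : X → Y} {m : Cochain Y} {x : X} (hf : ContinuousAt f x)
    (hm : ZeroAt m (f x)) : ZeroAt (pull f m) x := by
  have : Tendsto (Prod.map f f) (𝓝 (x, x)) (𝓝 (f x, f x)) := by
    rw [nhds_prod_eq, nhds_prod_eq]; exact hf.tendsto.prodMap hf.tendsto
  exact this.eventually hm

theorem zeroAt_of_pull {f : X → Y} (hf : IsOpenMap f) {m : Cochain Y} {x : X}
    (hm : ZeroAt (AlexanderSpanier.pull f m) x) : ZeroAt m (f x) := by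
  obtain ⟨W, hW, hy, h⟩ := zeroAt_iff.1 hm
  refine zeroAt_iff.2 ⟨f '' W, hf _ hW, ⟨x, hy, rfl⟩, ?_⟩
  rintro _ ⟨a, ha, rfl⟩ _ ⟨b, hb, rfl⟩
  exact h a ha b hb

theorem ZeroAt.closedAt {m : Cochain X} {y : X} (hm : ZeroAt m y) : ClosedAt m y :=
  ⟨0, by simpa [cobd_zero] using hm⟩

theorem closedAt_cobd (u : X → ZMod 2) (y : X) : ClosedAt (cobd u) y :=
  ⟨u, by rw [add_self_cochain]; exact zeroAt_zero y⟩

theorem ClosedAt.add {m n : Cochain X} {y : X} (hm : ClosedAt m y) (hn : ClosedAt n y) :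
    ClosedAt (m + n) y := by
  obtain ⟨u, hu⟩ := hm
  obtain ⟨v, hv⟩ := hn
  refine ⟨u + v, ?_⟩
  rw [cobd_add, add_add_add_comm]
  exact hu.add hv

theorem ClosedAt.pull {f : X → Y} {m : Cochain Y} {x : X} (hf : ContinuousAt f x)
    (hm : ClosedAt m (f x)) : ClosedAt (pull f m) x := by
  obtain ⟨u, hu⟩ := hm
  exact ⟨u ∘ f, ZeroAt.pull (f := f) hf hu⟩

theorem closedAt_of_pull {f : X → Y} (hf : IsOpenEmbedding f) {m : Cochain Y} {x : X}
    (hm : ClosedAt (AlexanderSpanier.pull f m) x) : ClosedAt m (f x) := by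
  obtain ⟨u, hu⟩ := hm
  refine ⟨Function.extend f u 0, zeroAt_of_pull hf.isOpenMap ?_⟩
  rwa [pull_add, pull_cobd, Function.extend_comp hf.injective]

theorem ResTriv.add {m n : Cochain X} {y : X} (hm : ResTriv m y) (hn : ResTriv n y) :
    ResTriv (m + n) y := by
  obtain ⟨u, hu⟩ := hm
  obtain ⟨v, hv⟩ := hn
  refine ⟨u + v, ?_⟩
  filter_upwards [hu, hv] with z h1 h2
  rw [cobd_add, add_add_add_comm]
  exact h1.add h2

theorem resTriv_of_eventually_zeroAt {m : Cochain X} {x : X}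
    (hm : ∀ᶠ y in 𝓝[≠] x, ZeroAt m y) : ResTriv m x :=
  ⟨0, by simpa [cobd_zero] using hm⟩

theorem resTriv_cobd (u : X → ZMod 2) (x : X) : ResTriv (cobd u) x :=
  ⟨u, by rw [add_self_cochain]; exact Eventually.of_forall fun y => zeroAt_zero y⟩

theorem ClosedAt.resTriv {m : Cochain X} {y : X} (hm : ClosedAt m y) : ResTriv m y := by
  obtain ⟨u, hu⟩ := hm
  exact ⟨u, hu.eventually.filter_mono nhdsWithin_le_nhds⟩

theorem ResTriv.pull {f : X → Y} {m : Cochain Y} {x : X} (hf : Continuous f)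
    (hi : Function.Injective f) (hm : ResTriv m (f x)) : ResTriv (pull f m) x := by
  obtain ⟨u, hu⟩ := hm
  have : Tendsto f (𝓝[≠] x) (𝓝[≠] f x) :=
    (hf.continuousAt.continuousWithinAt).tendsto_nhdsWithin fun y hy => hi.ne hy
  exact ⟨u ∘ f, (this.eventually hu).mono fun y hy => ZeroAt.pull (f := f) hf.continuousAt hy⟩

theorem _root_.Topology.IsOpenEmbedding.map_nhdsNE {f : X → Y} (hf : IsOpenEmbedding f) (x : X) :
    map f (𝓝[≠] x) = 𝓝[≠] f x := by
  rw [hf.isEmbedding.map_nhdsWithin_eq, image_compl_eq_range_sdiff_image hf.injective,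
    image_singleton, sdiff_eq,
    nhdsWithin_inter_of_mem (mem_nhdsWithin_of_mem_nhds (hf.isOpen_range.mem_nhds ⟨x, rfl⟩))]

theorem resTriv_of_pull {f : X → Y} (hf : IsOpenEmbedding f) {m : Cochain Y} {x : X}
    (hm : ResTriv (AlexanderSpanier.pull f m) x) : ResTriv m (f x) := by
  obtain ⟨u, hu⟩ := hm
  refine ⟨Function.extend f u 0, ?_⟩
  rw [← hf.map_nhdsNE, eventually_map]
  filter_upwards [hu] with y hy
  refine zeroAt_of_pull hf.isOpenMap ?_
  rwa [pull_add, pull_cobd, Function.extend_comp hf.injective]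

theorem resTriv_pull_iff {f : X → Y} (hf : IsOpenEmbedding f) {m : Cochain Y} {x : X} :
    ResTriv (pull f m) x ↔ ResTriv m (f x) :=
  ⟨resTriv_of_pull hf, ResTriv.pull hf.continuous hf.injective⟩

theorem closedAt_pull_iff {f : X → Y} (hf : IsOpenEmbedding f) {m : Cochain Y} {x : X} :
    ClosedAt (pull f m) x ↔ ClosedAt m (f x) :=
  ⟨closedAt_of_pull hf, ClosedAt.pull hf.continuous.continuousAt⟩

/-- The coboundary of `u` vanishes near `y` exactly if `u` is constant near `y`. -/
theorem zeroAt_cobd_iff {u : X → ZMod 2} {y : X} :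
    ZeroAt (cobd u) y ↔ ∀ᶠ z in 𝓝 y, u z = u y := by
  constructor
  · intro h
    obtain ⟨W, hW, hy, h⟩ := zeroAt_iff.1 h
    filter_upwards [hW.mem_nhds hy] with z hz
    exact CharTwo.add_eq_zero.1 (h z hz y hy)
  · intro h
    refine zeroAt_of_mem_nhds h fun a ha b hb => ?_
    rw [mem_ofPred_eq] at ha hb
    simp [cobd, ha, hb, CharTwo.add_self_eq_zero]

/-- A cochain is strongly supported in `C` if it vanishes on all pairs not contained in `C`. -/
def SuppIn {X : Type*} (m : Cochain X) (C : Set X) : Prop := ∀ a b, m a b ≠ 0 → a ∈ C ∧ b ∈ C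

theorem SuppIn.mono {X : Type*} {m : Cochain X} {C D : Set X} (h : SuppIn m C) (hCD : C ⊆ D) :
    SuppIn m D :=
  fun a b hab => ⟨hCD (h a b hab).1, hCD (h a b hab).2⟩

theorem SuppIn.add {X : Type*} {m n : Cochain X} {C : Set X} (hm : SuppIn m C) (hn : SuppIn n C) :
    SuppIn (m + n) C := by
  intro a b h
  by_cases h1 : m a b = 0
  · exact hn a b fun h2 => h (by simp [h1, h2])
  · exact hm a b h1

theorem SuppIn.zeroAt {m : Cochain X} {C : Set X} (h : SuppIn m C) (hC : IsClosed C) {y : X}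
    (hy : y ∉ C) : ZeroAt m y :=
  zeroAt_iff.2 ⟨Cᶜ, hC.isOpen_compl, hy, fun a ha b _ => by
    by_contra hab; exact ha (h a b hab).1⟩

/-- The restriction of a cochain to pairs of points of `C`. -/
noncomputable def restr {X : Type*} (C : Set X) (m : Cochain X) : Cochain X := by
  classical exact fun a b => if a ∈ C ∧ b ∈ C then m a b else 0

theorem restr_of_mem {X : Type*} {m : Cochain X} {C : Set X} {a b : X} (ha : a ∈ C) (hb : b ∈ C) :
    restr C m a b = m a b := by
  simp [restr, ha, hb]

theorem suppIn_restr {X : Type*} (C : Set X) (m : Cochain X) : SuppIn (restr C m) C := by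
  intro a b h
  by_contra h'
  exact h (by simp only [restr]; rw [if_neg h'])

theorem zeroAt_restr_add {m : Cochain X} {C : Set X} {y : X} (hy : C ∈ 𝓝 y) :
    ZeroAt (restr C m + m) y :=
  zeroAt_of_mem_nhds hy fun a ha b hb => by
    simp [restr_of_mem ha hb, CharTwo.add_self_eq_zero]

theorem ZeroAt.restr {m : Cochain X} {y : X} (h : ZeroAt m y) (C : Set X) :
    ZeroAt (restr C m) y := by
  filter_upwards [h] with p hp
  by_cases hC : p.1 ∈ C ∧ p.2 ∈ C
  · rw [restr_of_mem hC.1 hC.2, hp]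
  · exact by_contra fun hne => hC (suppIn_restr C m _ _ hne)

/-- A trivial residue can be removed by a cochain supported near the point. -/
theorem ResTriv.exists_removal {m : Cochain X} {x : X} (h : ResTriv m x) {U : Set X}
    (hU : U ∈ 𝓝 x) [T1Space X] [RegularSpace X] :
    ∃ κ : Cochain X, SuppIn κ U ∧ (∀ y ≠ x, ZeroAt κ y) ∧ ClosedAt (m + κ) x := by
  obtain ⟨u, hu⟩ := h
  rw [eventually_nhdsWithin_iff] at hu
  obtain ⟨C, hC, hCc, hCU⟩ := exists_mem_nhds_isClosed_subset (inter_mem hu hU)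
  refine ⟨AlexanderSpanier.restr C (m + cobd u), (suppIn_restr _ _).mono
    fun y hy => (hCU hy).2, fun y hy => ?_, u, ?_⟩
  · by_cases hyC : y ∈ C
    · exact ZeroAt.restr ((hCU hyC).1 hy) C
    · exact (suppIn_restr _ _).zeroAt hCc hyC
  · have := zeroAt_restr_add (m := m + cobd u) hC
    convert this using 1
    abel

end AlexanderSpanier

/-- The fibre bundle with discrete fibre `G` defined by a locally constant cocycle with values in
the group `G`, acting on the fibre by right multiplication. -/
def FiberBundleCore.ofCocycle {ι B G : Type*} [TopologicalSpace B] [Group G] [TopologicalSpace G]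
    [DiscreteTopology G] (U : ι → Set B) (hU : ∀ i, IsOpen (U i)) (idx : B → ι)
    (hidx : ∀ y, y ∈ U (idx y)) (τ : ι → ι → B → G)
    (hτ : ∀ i j, ∀ y ∈ U i ∩ U j, ∀ᶠ z in 𝓝 y, τ i j z = τ i j y)
    (hself : ∀ i, ∀ y ∈ U i, τ i i y = 1)
    (hcomp : ∀ i j k, ∀ y ∈ U i ∩ U j ∩ U k, τ i j y * τ j k y = τ i k y) :
    FiberBundleCore ι B G where
  baseSet := U
  isOpen_baseSet := hU
  indexAt := idx
  mem_baseSet_at := hidx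
  coordChange i j y g := g * τ i j y
  coordChange_self i y hy g := by simp [hself i y hy]
  continuousOn_coordChange i j := by
    rintro ⟨y, g⟩ ⟨hy, -⟩
    refine ContinuousAt.continuousWithinAt ?_
    rw [ContinuousAt, nhds_discrete G]
    refine tendsto_pure.2 ?_
    rw [nhds_prod_eq, nhds_discrete G]
    filter_upwards [(hτ i j y hy).prod_mk (show ∀ᶠ h in pure g, h = g by simp)] with p hp
    rw [hp.1, hp.2]
  coordChange_comp i j k y hy g := by rw [mul_assoc, hcomp i j k y hy]

theorem FiberBundleCore.isCoveringMap_proj {ι B F : Type*} [TopologicalSpace B]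
    [TopologicalSpace F] [DiscreteTopology F] (Z : FiberBundleCore ι B F) :
    IsCoveringMap Z.proj :=
  FiberBundle.isCoveringMap (F := F) (E := Z.Fiber)

namespace AlexanderSpanier

variable {X : Type*} [TopologicalSpace X]

/-- On a simply connected space closed cochains are exact. -/
theorem exists_primitive [SimplyConnectedSpace X] [LocallyPathConnectedSpace X] (m : Cochain X)
    (hm : ∀ y, ClosedAt m y) : ∃ u, ∀ y, ZeroAt (m + cobd u) y := by
  have key : ∀ y, ∃ u : X → ZMod 2, ∃ W : Set X, IsOpen W ∧ y ∈ W ∧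
      ∀ z ∈ W, ZeroAt (m + cobd u) z := fun y => by
    obtain ⟨u, hu⟩ := hm y
    exact ⟨u, _, isOpen_zeroAt _, hu, fun z hz => hz⟩
  choose u W hWo hW hz using key
  let _ : TopologicalSpace (Multiplicative (ZMod 2)) := ⊥
  have : DiscreteTopology (Multiplicative (ZMod 2)) := ⟨rfl⟩
  have hloc : ∀ i j, ∀ y ∈ W i ∩ W j, ∀ᶠ z in 𝓝 y, (u i + u j) z = (u i + u j) y := by
    intro i j y hy
    rw [← zeroAt_cobd_iff]
    have := (hz i y hy.1).add (hz j y hy.2)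
    rwa [add_add_add_comm, add_self_cochain, zero_add, ← cobd_add] at this
  let Z : FiberBundleCore X X (Multiplicative (ZMod 2)) :=
    FiberBundleCore.ofCocycle W hWo id hW
      (fun i j y => Multiplicative.ofAdd ((u i + u j) y))
      (fun i j y hy => (hloc i j y hy).mono fun z hz => by rw [hz])
      (fun i y _ => by simp [CharTwo.add_self_eq_zero])
      (fun i j k y _ => by
        rw [← ofAdd_add]
        congr 1
        simp only [Pi.add_apply]
        linear_combination CharTwo.add_self_eq_zero (u j y))
  obtain ⟨x₀⟩ : Nonempty X := inferInstance
  obtain ⟨σ, ⟨-, hσ⟩, -⟩ := Z.isCoveringMap_proj.existsUnique_continuousMap_lifts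
    (ContinuousMap.id X) x₀ (⟨x₀, (1 : Multiplicative (ZMod 2))⟩ : Z.TotalSpace) rfl
  have hσ' : ∀ y, (σ y).1 = y := fun y => congrFun hσ y
  let v : X → ZMod 2 := fun y => Multiplicative.toAdd (show Multiplicative (ZMod 2) from (σ y).2)
  refine ⟨fun y => v y + u y y, fun y => ?_⟩
  have h1 : ContinuousAt (fun z => (Z.localTriv y (σ z)).2) y := by
    refine continuous_snd.continuousAt.comp (ContinuousAt.comp ?_ σ.continuous.continuousAt)
    apply (Z.localTriv y).continuousAt
    rw [Z.mem_localTriv_source, hσ']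
    exact hW y
  rw [ContinuousAt, nhds_discrete (Multiplicative (ZMod 2)), tendsto_pure] at h1
  have h2 : ∀ᶠ z in 𝓝 y, ((fun y => v y + u y y) + u y) z = ((fun y => v y + u y y) + u y) y := by
    filter_upwards [h1] with z hz
    rw [Z.localTriv_apply, Z.localTriv_apply] at hz
    have : v z + (u (σ z).1 + u y) (σ z).1 = v y + (u (σ y).1 + u y) (σ y).1 :=
      congrArg Multiplicative.toAdd hz
    rw [hσ', hσ'] at this
    simpa [add_assoc] using this
  have h3 := (zeroAt_cobd_iff.2 h2).add (hz y y (hW y))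
  rw [cobd_add] at h3
  convert h3 using 1
  funext a b
  simp only [cobd, Pi.add_apply]
  grind

theorem eq_of_zeroAt_cobd {u : X → ZMod 2} {s : Set X} (hs : IsPreconnected s)
    (h : ∀ y ∈ s, ZeroAt (cobd u) y) {a b : X} (ha : a ∈ s) (hb : b ∈ s) : u a = u b := by
  refine hs.constant (fun y hy => ContinuousAt.continuousWithinAt ?_) ha hb
  rw [ContinuousAt, nhds_discrete (ZMod 2), tendsto_pure]
  exact zeroAt_cobd_iff.1 (h y hy)

/-- A primitive, on the logarithmic cover, of a cochain which is closed on the punctured plane. -/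
theorem exists_log_primitive {m : Cochain ℂ} (hm : ∀ z ≠ 0, ClosedAt m z) :
    ∃ (v : ℂ → ZMod 2) (c : ZMod 2), (∀ z, ZeroAt (pull Complex.exp m + cobd v) z) ∧
      ∀ z, v (z + 2 * Real.pi * Complex.I) = v z + c := by
  obtain ⟨v, hv⟩ := exists_primitive (pull Complex.exp m) fun z =>
    ClosedAt.pull Complex.continuous_exp.continuousAt (hm _ (Complex.exp_ne_zero z))
  let τ : ℂ → ℂ := fun z => z + 2 * Real.pi * Complex.I
  have hτ : Continuous τ := by fun_prop
  have hz : ∀ z ∈ (univ : Set ℂ), ZeroAt (cobd (v ∘ τ + v)) z := fun z _ => by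
    have h := (ZeroAt.pull hτ.continuousAt (hv (τ z))).add (hv z)
    convert h using 1
    ext a b
    simp only [cobd, pull, Pi.add_apply, τ, Complex.exp_periodic _, Function.comp]
    grind
  refine ⟨v, (v ∘ τ + v) 0, hv, fun z => ?_⟩
  rw [← eq_of_zeroAt_cobd isPreconnected_univ hz (mem_univ z) (mem_univ 0)]
  simp only [Pi.add_apply, Function.comp, τ]
  grind

theorem exact_of_log_primitive_periodic {m : Cochain ℂ} {v : ℂ → ZMod 2}
    (hv : ∀ z, ZeroAt (pull Complex.exp m + cobd v) z)
    (hp : Function.Periodic v (2 * Real.pi * Complex.I)) :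
    ∃ u, ∀ z ≠ 0, ZeroAt (m + cobd u) z := by
  refine ⟨v ∘ Complex.log, fun z hz => ?_⟩
  rw [← Complex.exp_log hz]
  refine zeroAt_of_pull Complex.isOpenMap_exp ?_
  rw [pull_add, pull_cobd]
  convert hv (Complex.log z) using 3
  ext w
  have : Complex.exp (Complex.log (Complex.exp w)) = Complex.exp w :=
    Complex.exp_log (Complex.exp_ne_zero w)
  obtain ⟨n, hn⟩ := Complex.exp_eq_exp_iff_exists_int.1 this
  simp only [Function.comp, hn]
  exact hp.int_mul n w

theorem exact_add_of_not_resTriv {m n : Cochain ℂ} (hm : ∀ z ≠ 0, ClosedAt m z)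
    (hn : ∀ z ≠ 0, ClosedAt n z) (hm' : ¬ ResTriv m 0) (hn' : ¬ ResTriv n 0) :
    ResTriv (m + n) 0 := by
  have key : ∀ {m : Cochain ℂ}, (∃ u, ∀ z ≠ 0, ZeroAt (m + cobd u) z) → ResTriv m 0 := by
    rintro m ⟨u, hu⟩
    exact ⟨u, eventually_nhdsWithin_of_forall fun z hz => hu z hz⟩
  obtain ⟨v, c, hv, hc⟩ := exists_log_primitive hm
  obtain ⟨w, d, hw, hd⟩ := exists_log_primitive hn
  have hc1 : c = 1 := by
    have : c ≠ 0 := fun h => hm' (key (exact_of_log_primitive_periodic hv (by simpa [h] using hc)))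
    revert this; clear hc; revert c; decide
  have hd1 : d = 1 := by
    have : d ≠ 0 := fun h => hn' (key (exact_of_log_primitive_periodic hw (by simpa [h] using hd)))
    revert this; clear hd; revert d; decide
  refine key (exact_of_log_primitive_periodic (v := v + w) (fun z => ?_) fun z => ?_)
  · rw [pull_add, cobd_add, add_add_add_comm]
    exact (hv z).add (hw z)
  · simp only [Pi.add_apply, hc, hd, hc1, hd1]
    grind

theorem resTriv_zero_of_compact {m : Cochain ℂ} (hm : ∀ z ≠ 0, ClosedAt m z) {K : Set ℂ}
    (hK : IsCompact K) (h : ∀ z ∉ K, ZeroAt m z) : ResTriv m 0 := by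
  obtain ⟨v, c, hv, hc⟩ := exists_log_primitive hm
  obtain ⟨r, hr⟩ := hK.isBounded.subset_closedBall 0
  have hz : ∀ z ∈ {z : ℂ | Real.log (max r 1) < z.re}, ZeroAt (cobd v) z := fun z hz => by
    have h1 : Complex.exp z ∉ K := fun hk => by
      have := hr hk
      rw [mem_closedBall_zero_iff, Complex.norm_exp] at this
      have h2 := (Real.log_lt_iff_lt_exp (by positivity)).1 hz
      have := le_max_left r 1
      linarith
    have h2 := (hv z).add (ZeroAt.pull Complex.continuous_exp.continuousAt (h _ h1))
    rwa [add_right_comm, add_self_cochain, zero_add] at h2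
  have hpre : IsPreconnected {z : ℂ | Real.log (max r 1) < z.re} :=
    (convex_halfSpace_re_gt _).isPreconnected
  have h0 := eq_of_zeroAt_cobd hpre hz
    (a := (((Real.log (max r 1) + 1 : ℝ) : ℂ) + 2 * Real.pi * Complex.I))
    (b := ((Real.log (max r 1) + 1 : ℝ) : ℂ)) (by simp) (by simp)
  rw [hc] at h0
  obtain ⟨u, hu⟩ := exact_of_log_primitive_periodic hv (fun z => by rw [hc]; grind)
  exact ⟨u, eventually_nhdsWithin_of_forall fun z hz => hu z hz⟩

/-- `X` is locally homeomorphic to the plane. -/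
def LocallyPlane (X : Type*) [TopologicalSpace X] : Prop :=
  ∀ x : X, ∃ f : ℂ → X, IsOpenEmbedding f ∧ f 0 = x

/-- The open embedding of the plane onto a ball. -/
theorem exists_openEmbedding_ball (c : ℂ) {r : ℝ} (hr : 0 < r) :
    ∃ g : ℂ → ℂ, IsOpenEmbedding g ∧ g 0 = c ∧ range g = Metric.ball c r := by
  refine ⟨OpenPartialHomeomorph.univBall c r,
    (OpenPartialHomeomorph.univBall c r).isOpenEmbedding (by simp), by simp, ?_⟩
  rw [← OpenPartialHomeomorph.univBall_target c hr,
    ← (OpenPartialHomeomorph.univBall c r).image_source_eq_target,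
    OpenPartialHomeomorph.univBall_source, image_univ]

theorem LocallyPlane.exists_range_subset (hX : LocallyPlane X) {x : X} {U : Set X}
    (hU : U ∈ 𝓝 x) : ∃ f : ℂ → X, IsOpenEmbedding f ∧ f 0 = x ∧ range f ⊆ U := by
  obtain ⟨f, hf, rfl⟩ := hX x
  obtain ⟨r, hr, hrU⟩ := Metric.mem_nhds_iff.1 (hf.continuous.continuousAt hU)
  obtain ⟨g, hg, hg0, hgr⟩ := exists_openEmbedding_ball 0 hr
  refine ⟨f ∘ g, hf.comp hg, by simp [hg0], ?_⟩
  rw [range_comp, hgr]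
  exact image_subset_iff.2 hrU

open Classical in
/-- The residue of a cochain at a point. -/
noncomputable def res (m : Cochain X) (x : X) : ZMod 2 := if ResTriv m x then 0 else 1

theorem res_eq_zero_iff {m : Cochain X} {x : X} : res m x = 0 ↔ ResTriv m x := by
  unfold res; split_ifs with h <;> simp [h]

theorem res_eq_one_iff {m : Cochain X} {x : X} : res m x = 1 ↔ ¬ ResTriv m x := by
  unfold res; split_ifs with h <;> simp [h]

theorem res_add (hX : LocallyPlane X) {m n : Cochain X} {x : X}
    (hm : ∀ᶠ y in 𝓝[≠] x, ClosedAt m y) (hn : ∀ᶠ y in 𝓝[≠] x, ClosedAt n y) :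
    res (m + n) x = res m x + res n x := by
  have e1 : m + n + m = n := by ext a b; simp only [Pi.add_apply]; grind
  have e2 : m + n + n = m := by ext a b; simp only [Pi.add_apply]; grind
  by_cases h1 : ResTriv m x <;> by_cases h2 : ResTriv n x
  · rw [res_eq_zero_iff.2 h1, res_eq_zero_iff.2 h2, res_eq_zero_iff.2 (h1.add h2), add_zero]
  · rw [res_eq_zero_iff.2 h1, res_eq_one_iff.2 h2, zero_add, res_eq_one_iff]
    exact fun h => h2 (e1 ▸ h.add h1)
  · rw [res_eq_zero_iff.2 h2, res_eq_one_iff.2 h1, add_zero, res_eq_one_iff]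
    exact fun h => h1 (e2 ▸ h.add h2)
  · rw [res_eq_one_iff.2 h1, res_eq_one_iff.2 h2, show (1 : ZMod 2) + 1 = 0 from rfl,
      res_eq_zero_iff]
    obtain ⟨f, hf, rfl, hU⟩ := hX.exists_range_subset
      (eventually_nhdsWithin_iff.1 (hm.and hn))
    have key : ∀ z ≠ 0, ClosedAt m (f z) ∧ ClosedAt n (f z) :=
      fun z hz => hU ⟨z, rfl⟩ (hf.injective.ne hz)
    rw [← resTriv_pull_iff hf] at h1 h2 ⊢
    exact exact_add_of_not_resTriv (fun z hz => (key z hz).1.pull hf.continuous.continuousAt)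
      (fun z hz => (key z hz).2.pull hf.continuous.continuousAt) h1 h2

theorem eventually_nhdsNE_of_finite [T1Space X] {P : X → Prop} {F : Set X} (hF : F.Finite)
    (h : ∀ y ∉ F, P y) (x : X) : ∀ᶠ y in 𝓝[≠] x, P y := by
  have : (F \ {x})ᶜ ∈ 𝓝 x := (hF.sdiff).isClosed.isOpen_compl.mem_nhds (by simp)
  rw [eventually_nhdsWithin_iff]
  filter_upwards [this] with y hy hyx
  exact h y fun hyF => hy ⟨hyF, hyx⟩

theorem resTriv_add_iff {m κ : Cochain X} {x : X} (h : ∀ᶠ y in 𝓝[≠] x, ZeroAt κ y) :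
    ResTriv (m + κ) x ↔ ResTriv m x := by
  refine ⟨fun h' => ?_, fun h' => h'.add (resTriv_of_eventually_zeroAt h)⟩
  have := h'.add (resTriv_of_eventually_zeroAt h)
  rwa [add_assoc, add_self_cochain, add_zero] at this

/-- The rectangle used in the definition of the model cochain. -/
def modelRect : Set ℂ := Ioo (-1) 0 ×ℂ Ioo (-1) 1

/-- The indicator of the closed upper half plane. -/
noncomputable def upper (z : ℂ) : ZMod 2 := if 0 ≤ z.im then 1 else 0

/-- The model cochain: the intersection number with the segment from `-1` to `0`. -/
noncomputable def modelCochain : Cochain ℂ := restr modelRect (cobd upper)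

theorem zeroAt_cobd_upper {z : ℂ} (hz : z.im ≠ 0) : ZeroAt (cobd upper) z := by
  rw [zeroAt_cobd_iff]
  rcases lt_or_gt_of_ne hz with h | h
  · filter_upwards [Complex.continuous_im.continuousAt.eventually_lt_const h] with w hw
    simp [upper, h.not_ge, hw.not_ge]
  · filter_upwards [Complex.continuous_im.continuousAt.eventually_const_lt h] with w hw
    simp [upper, h.le, hw.le]

theorem zeroAt_modelCochain_of_im {z : ℂ} (hz : z.im ≠ 0) : ZeroAt modelCochain z :=
  (zeroAt_cobd_upper hz).restr _

theorem suppIn_modelCochain : SuppIn modelCochain (Icc (-1) 0 ×ℂ Icc (-1) 1) :=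
  (suppIn_restr _ _).mono fun _ hz => ⟨Ioo_subset_Icc_self hz.1, Ioo_subset_Icc_self hz.2⟩

theorem isCompact_modelSupport : IsCompact (Icc (-1 : ℝ) 0 ×ℂ Icc (-1 : ℝ) 1) :=
  isCompact_Icc.reProdIm isCompact_Icc

theorem zeroAt_modelCochain_of_re {z : ℂ} (hz : 0 < z.re ∨ z.re < -1) : ZeroAt modelCochain z := by
  refine suppIn_modelCochain.zeroAt isCompact_modelSupport.isClosed fun h => ?_
  have := h.1.1
  have := h.1.2
  rcases hz with hz | hz <;> linarith

theorem zeroAt_modelCochain_add {z : ℂ} (hz : z ∈ modelRect) :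
    ZeroAt (modelCochain + cobd upper) z :=
  zeroAt_restr_add ((isOpen_Ioo.reProdIm isOpen_Ioo).mem_nhds hz)

theorem closedAt_modelCochain {z : ℂ} (h0 : z ≠ 0) (h1 : z ≠ -1) : ClosedAt modelCochain z := by
  by_cases him : z.im = 0
  · have e0 : z.re ≠ 0 := fun h => h0 (Complex.ext h him)
    have e1 : z.re ≠ -1 := fun h => h1 (Complex.ext h (by simpa using him))
    by_cases hr : 0 < z.re ∨ z.re < -1
    · exact (zeroAt_modelCochain_of_re hr).closedAt
    · push Not at hr
      refine ⟨upper, zeroAt_modelCochain_add ⟨⟨lt_of_le_of_ne hr.2 e1.symm,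
        lt_of_le_of_ne hr.1 e0⟩, by simp [him]⟩⟩
  · exact (zeroAt_modelCochain_of_im him).closedAt

theorem not_resTriv_modelCochain_zero : ¬ ResTriv modelCochain 0 := by
  rintro ⟨u, hu⟩
  rw [eventually_nhdsWithin_iff, Metric.eventually_nhds_iff_ball] at hu
  obtain ⟨r₀, hr₀, hu⟩ := hu
  obtain ⟨r, hr, hrr, hr1⟩ : ∃ r, 0 < r ∧ r ≤ r₀ ∧ r ≤ 1 :=
    ⟨min r₀ 1, by positivity, min_le_left _ _, min_le_right _ _⟩
  have hu' : ∀ z ∈ Metric.ball (0 : ℂ) r, z ≠ 0 → ZeroAt (modelCochain + cobd u) z :=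
    fun z hz h => hu z (Metric.ball_subset_ball hrr hz) h
  have hball := convex_ball (0 : ℂ) r
  have hmem : ∀ x y : ℝ, |x| = r / 2 → |y| = r / 2 → (⟨x, y⟩ : ℂ) ∈ Metric.ball (0 : ℂ) r := by
    intro x y hx hy
    rw [mem_ball_zero_iff, Complex.norm_eq_sqrt_sq_add_sq, Real.sqrt_lt' hr]
    simp only
    rw [← sq_abs x, ← sq_abs y, hx, hy]
    nlinarith
  have hp : |r / 2| = r / 2 := abs_of_pos (by positivity)
  have hn : |-(r / 2)| = r / 2 := by rw [abs_neg, hp]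
  have hz : ∀ z ∈ Metric.ball (0 : ℂ) r, z ≠ 0 → ZeroAt modelCochain z → ZeroAt (cobd u) z := by
    intro z hz h0 h
    have := (hu' z hz h0).add h
    rwa [add_right_comm, add_self_cochain, zero_add] at this
  have h1 : u ⟨-(r / 2), r / 2⟩ = u ⟨r / 2, r / 2⟩ :=
    eq_of_zeroAt_cobd ((hball.inter (convex_halfSpace_im_gt 0)).isPreconnected)
      (fun z hz' => hz z hz'.1 (by rintro rfl; simpa using hz'.2)
        (zeroAt_modelCochain_of_im (ne_of_gt hz'.2)))
      ⟨hmem _ _ hn hp, by simp [hr]⟩ ⟨hmem _ _ hp hp, by simp [hr]⟩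
  have h2 : u ⟨r / 2, r / 2⟩ = u ⟨r / 2, -(r / 2)⟩ :=
    eq_of_zeroAt_cobd ((hball.inter (convex_halfSpace_re_gt 0)).isPreconnected)
      (fun z hz' => hz z hz'.1 (by rintro rfl; simpa using hz'.2)
        (zeroAt_modelCochain_of_re (Or.inl hz'.2)))
      ⟨hmem _ _ hp hp, by simp [hr]⟩ ⟨hmem _ _ hp hn, by simp [hr]⟩
  have h3 : u ⟨r / 2, -(r / 2)⟩ = u ⟨-(r / 2), -(r / 2)⟩ :=
    eq_of_zeroAt_cobd ((hball.inter (convex_halfSpace_im_lt 0)).isPreconnected)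
      (fun z hz' => hz z hz'.1 (by rintro rfl; simpa using hz'.2)
        (zeroAt_modelCochain_of_im (ne_of_lt hz'.2)))
      ⟨hmem _ _ hp hn, by simp [hr]⟩ ⟨hmem _ _ hn hn, by simp [hr]⟩
  have h4 : (u + upper) ⟨-(r / 2), r / 2⟩ = (u + upper) ⟨-(r / 2), -(r / 2)⟩ := by
    refine eq_of_zeroAt_cobd ((hball.inter (convex_halfSpace_re_lt 0)).isPreconnected)
      (fun z hz' => ?_) ⟨hmem _ _ hn hp, by simp [hr]⟩ ⟨hmem _ _ hn hn, by simp [hr]⟩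
    have hnorm := mem_ball_zero_iff.1 hz'.1
    have hre := abs_lt.1 ((Complex.abs_re_le_norm z).trans_lt hnorm)
    have him := abs_lt.1 ((Complex.abs_im_le_norm z).trans_lt hnorm)
    have hzr : z ∈ modelRect :=
      ⟨⟨by linarith, hz'.2⟩, ⟨by linarith, by linarith⟩⟩
    have := (hu' z hz'.1 (by rintro rfl; simpa using hz'.2)).add (zeroAt_modelCochain_add hzr)
    rwa [add_add_add_comm, add_self_cochain, zero_add, ← cobd_add] at this
  have e1 : upper ⟨-(r / 2), r / 2⟩ = 1 := if_pos (by simp only; positivity)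
  have e2 : upper ⟨-(r / 2), -(r / 2)⟩ = 0 := by simp [upper, hr]
  simp only [Pi.add_apply, e1, e2, h1, h2, h3, add_zero] at h4
  simp at h4

theorem not_resTriv_modelCochain_neg_one : ¬ ResTriv modelCochain (-1) := by
  intro h
  obtain ⟨κ, hκ, hκ', hc⟩ := h.exists_removal (Metric.closedBall_mem_nhds (-1 : ℂ)
    (show (0 : ℝ) < 1 / 2 by norm_num))
  refine not_resTriv_modelCochain_zero ((resTriv_add_iff (κ := κ) ?_).1
    (resTriv_zero_of_compact (fun z hz => ?_)
      (isCompact_modelSupport.union (isCompact_closedBall (-1 : ℂ) (1 / 2))) fun z hz => ?_))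
  · refine (ZeroAt.eventually (hκ' 0 ?_)).filter_mono nhdsWithin_le_nhds
    simp
  · by_cases h1 : z = -1
    · rwa [h1]
    · exact (closedAt_modelCochain hz h1).add (hκ' z h1).closedAt
  · rw [mem_union, not_or] at hz
    exact (suppIn_modelCochain.zeroAt isCompact_modelSupport.isClosed hz.1).add
      (hκ.zeroAt Metric.isClosed_closedBall hz.2)

/-- A compactly supported cochain on the plane whose singularities are two given points. -/
theorem exists_dipole_complex {p q : ℂ} (hpq : p ≠ q) :
    ∃ (ℓ : Cochain ℂ) (C : Set ℂ), IsCompact C ∧ SuppIn ℓ C ∧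
      (∀ z, z ≠ p → z ≠ q → ClosedAt ℓ z) ∧ ¬ ResTriv ℓ p ∧ ¬ ResTriv ℓ q := by
  have hne : p - q ≠ 0 := sub_ne_zero.2 hpq
  let f : ℂ ≃ₜ ℂ := (Homeomorph.mulRight₀ (p - q) hne).trans (Homeomorph.addRight p)
  have f0 : f.symm p = 0 := f.injective (by rw [f.apply_symm_apply]; simp [f])
  have f1 : f.symm q = -1 := f.injective (by rw [f.apply_symm_apply]; simp [f])
  refine ⟨pull f.symm modelCochain, f '' _, isCompact_modelSupport.image f.continuous,
    fun a b hab => ?_, fun z hp hq => ?_, fun h => ?_, fun h => ?_⟩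
  · have := suppIn_modelCochain _ _ hab
    exact ⟨⟨_, this.1, by simp⟩, ⟨_, this.2, by simp⟩⟩
  · refine ClosedAt.pull f.symm.continuous.continuousAt (closedAt_modelCochain ?_ ?_)
    · rw [← f0]; exact f.symm.injective.ne hp
    · rw [← f1]; exact f.symm.injective.ne hq
  · rw [resTriv_pull_iff f.symm.isOpenEmbedding, f0] at h
    exact not_resTriv_modelCochain_zero h
  · rw [resTriv_pull_iff f.symm.isOpenEmbedding, f1] at h
    exact not_resTriv_modelCochain_neg_one h

theorem locallyPlane_complex : LocallyPlane ℂ := fun x =>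
  ⟨Homeomorph.addRight x, (Homeomorph.addRight x).isOpenEmbedding, by simp⟩

theorem res_eq_zero_of_closedAt {m : Cochain X} {x : X} (h : ClosedAt m x) : res m x = 0 :=
  res_eq_zero_iff.2 h.resTriv

theorem res_congr {Y : Type*} [TopologicalSpace Y] {m : Cochain X} {n : Cochain Y} {x : X} {y : Y}
    (h : ResTriv m x ↔ ResTriv n y) : res m x = res n y := by
  by_cases h' : ResTriv n y
  · rw [res_eq_zero_iff.2 h', res_eq_zero_iff.2 (h.2 h')]
  · rw [res_eq_one_iff.2 h', res_eq_one_iff.2 (mt h.1 h')]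

theorem res_add_of_zeroAt {m κ : Cochain X} {x : X} (h : ∀ᶠ y in 𝓝[≠] x, ZeroAt κ y) :
    res (m + κ) x = res m x :=
  res_congr (resTriv_add_iff h)

theorem res_zero_add_sum_complex (F : Finset ℂ) (hF : 0 ∉ F) (m : Cochain ℂ)
    (hm : ∀ z, z ≠ 0 → z ∉ F → ClosedAt m z) {K : Set ℂ} (hK : IsCompact K)
    (h : ∀ z ∉ K, ZeroAt m z) : res m 0 + ∑ x ∈ F, res m x = 0 := by
  classical
  induction F using Finset.induction_on generalizing m K with
  | empty =>
    simpa using res_eq_zero_iff.2 (resTriv_zero_of_compact (fun z hz => hm z hz (by simp)) hK h)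
  | insert x F hx ih =>
    have hx0 : x ≠ 0 := fun h => hF (by simp [h])
    have hF0 : 0 ∉ F := fun h => hF (by simp [h])
    have key : ∀ (m : Cochain ℂ), (∀ z, z ≠ 0 → z ∉ insert x F → ClosedAt m z) →
        ∀ {K : Set ℂ}, IsCompact K → (∀ z ∉ K, ZeroAt m z) → ResTriv m x →
        res m 0 + ∑ y ∈ F, res m y = 0 := by
      intro m hm K hK h hres
      obtain ⟨κ, hκ, hκ', hc⟩ := hres.exists_removal
        (Metric.closedBall_mem_nhds x zero_lt_one)
      have hr : ∀ y ≠ x, res (m + κ) y = res m y := fun y hy => res_add_of_zeroAt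
        ((hκ' y hy).eventually.filter_mono nhdsWithin_le_nhds)
      have := ih hF0 (m + κ) (fun z hz hzF => ?_) (hK.union (isCompact_closedBall x 1))
        fun z hz => ?_
      · rw [← hr 0 hx0.symm, ← this]
        congr 1
        refine Finset.sum_congr rfl fun y hy => (hr y ?_).symm
        rintro rfl
        exact hx hy
      · by_cases hzx : z = x
        · rwa [hzx]
        · exact (hm z hz (by simp [hzx, hzF])).add (hκ' z hzx).closedAt
      · rw [mem_union, not_or] at hz
        exact (h z hz.1).add (hκ.zeroAt Metric.isClosed_closedBall hz.2)
    rw [Finset.sum_insert hx]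
    by_cases hres : ResTriv m x
    · rw [res_eq_zero_iff.2 hres, zero_add]
      exact key m hm hK h hres
    · obtain ⟨ℓ, C, hC, hℓC, hℓ, hℓx, hℓ0⟩ := exists_dipole_complex hx0
      have hmcl : ∀ z ∉ (insert 0 (insert x F) : Finset ℂ), ClosedAt m z := fun z hz => by
        rw [Finset.mem_insert, not_or] at hz
        exact hm z hz.1 hz.2
      have hℓcl : ∀ z ∉ (insert 0 (insert x F) : Finset ℂ), ClosedAt ℓ z := fun z hz => by
        simp only [Finset.mem_insert, not_or] at hz
        exact hℓ z hz.2.1 hz.1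
      have hadd : ∀ y, res (m + ℓ) y = res m y + res ℓ y := fun y =>
        res_add locallyPlane_complex
          (eventually_nhdsNE_of_finite (Finset.finite_toSet _) hmcl y)
          (eventually_nhdsNE_of_finite (Finset.finite_toSet _) hℓcl y)
      have := key (m + ℓ) (fun z hz hzF => (hm z hz hzF).add (hℓcl z (by
          rw [Finset.mem_insert, not_or]; exact ⟨hz, hzF⟩))) (hK.union hC) (fun z hz => ?_) ?_
      · rw [hadd 0, res_eq_one_iff.2 hℓ0] at this
        rw [res_eq_one_iff.2 hres, ← add_assoc, ← this]
        congr 1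
        refine Finset.sum_congr rfl fun y hy => ?_
        rw [hadd, res_eq_zero_of_closedAt (m := ℓ), add_zero]
        exact hℓ y (by rintro rfl; exact hx hy) (by rintro rfl; exact hF0 hy)
      · rw [mem_union, not_or] at hz
        exact (h z hz.1).add (hℓC.zeroAt hC.isClosed hz.2)
      · rw [← res_eq_zero_iff, hadd, res_eq_one_iff.2 hres, res_eq_one_iff.2 hℓx]
        rfl

theorem sum_res_complex (F : Finset ℂ) (m : Cochain ℂ) (hm : ∀ z ∉ F, ClosedAt m z) {K : Set ℂ}
    (hK : IsCompact K) (h : ∀ z ∉ K, ZeroAt m z) : ∑ x ∈ F, res m x = 0 := by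
  classical
  have key := res_zero_add_sum_complex (F.erase 0) (by simp) m
    (fun z hz hzF => hm z fun hF => hzF (by simp [hz, hF])) hK h
  by_cases h0 : 0 ∈ F
  · rwa [Finset.add_sum_erase F _ h0] at key
  · rwa [Finset.erase_eq_of_notMem h0, res_eq_zero_of_closedAt (hm 0 h0), zero_add] at key

theorem sum_res_of_subset_range {f : ℂ → X} (hf : IsOpenEmbedding f) (F : Finset X)
    (m : Cochain X) (hm : ∀ z ∉ F, ClosedAt m z) {K : Set X} (hK : IsCompact K)
    (hKf : K ⊆ range f) (h : ∀ z ∉ K, ZeroAt m z) : ∑ x ∈ F, res m x = 0 := by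
  rw [← Finset.sum_preimage f F hf.injective.injOn (res m) fun x _ hx =>
    res_eq_zero_of_closedAt (h x fun hxK => hx (hKf hxK)).closedAt]
  have : ∀ z, res m (f z) = res (pull f m) z :=
    fun z => res_congr (resTriv_pull_iff hf).symm
  simp only [this]
  refine sum_res_complex _ _ (fun z hz => ?_) ((hf.isInducing.isCompact_preimage_iff hKf).2 hK)
    fun z hz => ZeroAt.pull hf.continuous.continuousAt (h _ hz)
  exact ClosedAt.pull hf.continuous.continuousAt (hm _ (by simpa using hz))

theorem finite_sphere_inter_sphere {c₁ c₂ : ℂ} (hc : c₁ ≠ c₂) (r₁ r₂ : ℝ) :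
    (Metric.sphere c₁ r₁ ∩ Metric.sphere c₂ r₂).Finite := by
  rcases (Metric.sphere c₁ r₁ ∩ Metric.sphere c₂ r₂).subsingleton_or_nontrivial with h | h
  · exact h.finite
  · obtain ⟨p, hp, q, hq, hpq⟩ := h
    refine (Set.toFinite {p, q}).subset fun z hz => ?_
    exact EuclideanGeometry.eq_of_dist_eq_of_dist_eq_of_finrank_eq_two
      Complex.finrank_real_complex hc hpq hp.1 hq.1 hz.1 hp.2 hq.2 hz.2

/-- A primitive, near all but finitely many points of a circle, of a cochain which is closed near
the circle. -/
theorem exists_primitive_near_sphere {m : Cochain ℂ} {V : Set ℂ} (hV : IsOpen V) {r : ℝ}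
    (hr : 0 < r) (hm : ∀ z ∈ Metric.sphere 0 r, ClosedAt m z)
    (hz : ∀ z ∈ Metric.sphere 0 r, z ∉ V → ZeroAt m z) :
    ∃ (w : ℂ → ZMod 2) (Q : Finset ℂ), (∀ z ∈ Q, z ∈ Metric.sphere 0 r ∩ V) ∧
      (∀ z ∈ Metric.sphere 0 r, z ∉ Q → ZeroAt (m + cobd w) z) ∧
      ∀ z ∈ Metric.sphere 0 r, z ∉ V → ∀ᶠ z' in 𝓝 z, w z' = 0 := by
  classical
  have key : ∀ y ∈ Metric.sphere (0 : ℂ) r, ∃ (u : ℂ → ZMod 2) (ρ : ℝ), 0 < ρ ∧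
      (∀ z ∈ Metric.closedBall y ρ, ZeroAt (m + cobd u) z) ∧
      (u ≠ 0 → Metric.closedBall y ρ ⊆ V) := by
    intro y hy
    by_cases hyV : y ∈ V
    · obtain ⟨u, hu⟩ := hm y hy
      obtain ⟨ρ, hρ, h⟩ := Metric.nhds_basis_closedBall.mem_iff.1
        (inter_mem hu.eventually (hV.mem_nhds hyV))
      exact ⟨u, ρ, hρ, fun z hz => (h hz).1, fun _ z hz => (h hz).2⟩
    · obtain ⟨ρ, hρ, h⟩ := Metric.nhds_basis_closedBall.mem_iff.1 (hz y hy hyV).eventually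
      exact ⟨0, ρ, hρ, fun z hz => by rw [cobd_zero, add_zero]; exact h hz, fun h => absurd rfl h⟩
  choose! u ρ hρ hu huV using key
  obtain ⟨t, ht, hcov⟩ := (isCompact_sphere (0 : ℂ) r).elim_nhds_subcover
    (fun y => Metric.ball y (ρ y)) fun y hy => Metric.ball_mem_nhds y (hρ y hy)
  let A : ℂ → Finset ℂ := fun z => t.filter fun y => z ∈ Metric.ball y (ρ y)
  have hA : ∀ {z y}, y ∈ A z ↔ y ∈ t ∧ z ∈ Metric.ball y (ρ y) := by simp [A]
  obtain ⟨c, hc⟩ : ∃ c : Finset ℂ → ℂ, ∀ B : Finset ℂ, B.Nonempty → c B ∈ B :=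
    ⟨fun B => if h : B.Nonempty then h.choose else 0, fun B hB => by
      simp only [dif_pos hB]; exact hB.choose_spec⟩
  let w : ℂ → ZMod 2 := fun z => if (A z).Nonempty then u (c (A z)) z else 0
  have hfin : (Metric.sphere 0 r ∩ V ∩ ⋃ y ∈ t, Metric.sphere y (ρ y)).Finite := by
    refine (t.finite_toSet.biUnion fun y hy => finite_sphere_inter_sphere (c₁ := 0) (c₂ := y)
      ?_ r (ρ y)).subset ?_
    · rintro rfl
      have := ht _ hy
      simp at this
      exact hr.ne this
    · rintro z ⟨hz, hz'⟩
      obtain ⟨y, hy, hzy⟩ := mem_iUnion₂.1 hz'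
      exact mem_iUnion₂.2 ⟨y, hy, hz.1, hzy⟩
  have hw0 : ∀ z ∈ Metric.sphere 0 r, z ∉ V → ∀ᶠ z' in 𝓝 z, w z' = 0 := by
    intro z hzs hzV
    have : ∀ᶠ z' in 𝓝 z, ∀ y ∈ t, z' ∈ Metric.ball y (ρ y) → z ∈ Metric.closedBall y (ρ y) := by
      rw [Filter.eventually_all_finset]
      intro y hy
      by_cases h : z ∈ Metric.closedBall y (ρ y)
      · exact Eventually.of_forall fun _ _ => h
      · filter_upwards [Metric.isClosed_closedBall.isOpen_compl.mem_nhds h] with z' hz' h'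
        exact absurd (Metric.ball_subset_closedBall h') hz'
    filter_upwards [this] with z' hz'
    simp only [w]
    split_ifs with hne
    · have h1 := hA.1 (hc _ hne)
      have h2 : u (c (A z')) = 0 := by
        by_contra h3
        exact hzV (huV _ (ht _ h1.1) h3 (hz' _ h1.1 h1.2))
      rw [h2]; rfl
    · rfl
  refine ⟨w, hfin.toFinset, fun z hz => ((hfin.mem_toFinset).1 hz).1, fun z hzs hzQ => ?_, hw0⟩
  rw [hfin.mem_toFinset] at hzQ
  by_cases hzV : z ∈ V
  · have hloc : ∀ᶠ z' in 𝓝 z, A z' = A z := by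
      have : ∀ᶠ z' in 𝓝 z, ∀ y ∈ t, (z' ∈ Metric.ball y (ρ y) ↔ z ∈ Metric.ball y (ρ y)) := by
        rw [Filter.eventually_all_finset]
        intro y hy
        by_cases h : z ∈ Metric.ball y (ρ y)
        · filter_upwards [Metric.isOpen_ball.mem_nhds h] with z' hz'
          simp only [h, hz']
        · have h' : z ∉ Metric.closedBall y (ρ y) := fun h' => hzQ
            ⟨⟨hzs, hzV⟩, mem_iUnion₂.2 ⟨y, hy, le_antisymm h' (not_lt.1 h)⟩⟩
          filter_upwards [Metric.isClosed_closedBall.isOpen_compl.mem_nhds h'] with z' hz'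
          simp only [h, iff_false]
          exact fun h'' => hz' (Metric.ball_subset_closedBall h'')
      filter_upwards [this] with z' hz'
      ext y
      rw [hA, hA]
      exact and_congr_right (hz' y)
    have hne : (A z).Nonempty := by
      obtain ⟨y, hy, hzy⟩ := mem_iUnion₂.1 (hcov hzs)
      exact ⟨y, hA.2 ⟨hy, hzy⟩⟩
    have hcz := hA.1 (hc _ hne)
    refine (hu _ (ht _ hcz.1) z (Metric.ball_subset_closedBall hcz.2)).congr_set hloc ?_
    intro a ha b hb
    rw [mem_ofPred_eq] at ha hb
    simp only [w, cobd, Pi.add_apply, ha, hb, if_pos hne]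
  · refine (hz z hzs hzV).congr_set (hw0 z hzs hzV) fun a ha b hb => ?_
    rw [mem_ofPred_eq] at ha hb
    simp [cobd, ha, hb]

/-- A compactly supported cochain is the sum of a cochain supported in a disc, a cochain supported
in `V`, and a cochain without residues. -/
theorem exists_splitting [T2Space X] {f : ℂ → X} (hf : IsOpenEmbedding f) {V K : Set X}
    (hV : IsOpen V) (hK : IsCompact K) (hKV : K ⊆ range f ∪ V) {m : Cochain X} {F : Finset X}
    (hm : ∀ z ∉ F, ClosedAt m z) (hz : ∀ z ∉ K, ZeroAt m z) :
    ∃ (m₁ m₂ : Cochain X) (K₁ K₂ : Set X) (F' : Finset X), F ⊆ F' ∧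
      IsCompact K₁ ∧ K₁ ⊆ range f ∧ (∀ z ∉ K₁, ZeroAt m₁ z) ∧ (∀ z ∉ F', ClosedAt m₁ z) ∧
      IsCompact K₂ ∧ K₂ ⊆ V ∧ (∀ z ∉ K₂, ZeroAt m₂ z) ∧ (∀ z ∉ F', ClosedAt m₂ z) ∧
      ∀ x, ResTriv (m + (m₁ + m₂)) x := by
  classical
  have hKV' : K \ V ⊆ range f := fun x hx => (hKV hx.1).resolve_right hx.2
  have hc : IsCompact (f ⁻¹' (K \ V)) := (hf.isInducing.isCompact_preimage_iff hKV').2 (hK.diff hV)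
  obtain ⟨R, hR0, hR⟩ : ∃ R : ℝ, 0 ≤ R ∧ f ⁻¹' (K \ V) ⊆ Metric.closedBall 0 R := by
    obtain ⟨R, hR⟩ := hc.isBounded.subset_closedBall 0
    exact ⟨max R 0, le_max_right _ _, hR.trans (Metric.closedBall_subset_closedBall
      (le_max_left _ _))⟩
  obtain ⟨r, hrR, hrF⟩ := (Set.Ioi_infinite R).exists_notMem_finite
    (((F.finite_toSet.preimage hf.injective.injOn)).image norm)
  have hr : 0 < r := hR0.trans_lt hrR
  have hFs : ∀ z ∈ Metric.sphere (0 : ℂ) r, f z ∉ F := fun z hz hzF =>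
    hrF ⟨z, hzF, mem_sphere_zero_iff_norm.1 hz⟩
  have hsK : ∀ z, r ≤ ‖z‖ → f z ∈ K → f z ∈ V := fun z hz hzK => by
    by_contra hzV
    have := mem_closedBall_zero_iff.1 (hR ⟨hzK, hzV⟩)
    exact absurd (this.trans_lt hrR) (not_lt.2 hz)
  obtain ⟨w, Q, hQ, hw, hw0⟩ := exists_primitive_near_sphere (m := pull f m)
    (hV.preimage hf.continuous) hr
    (fun z hz => ClosedAt.pull hf.continuous.continuousAt (hm _ (hFs z hz)))
    (fun z hzs hzV => ZeroAt.pull hf.continuous.continuousAt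
      (hz _ fun hzK => hzV (hsK z (mem_sphere_zero_iff_norm.1 hzs).ge hzK)))
  let W : X → ZMod 2 := Function.extend f w 0
  have hWf : ∀ z, W (f z) = w z := hf.injective.extend_apply w 0
  let N : Set X := f '' Metric.closedBall 0 r
  have hN : IsCompact N := (isCompact_closedBall 0 r).image hf.continuous
  let n : Cochain X := m + cobd W
  let m₁ : Cochain X := restr N n
  let m₂ : Cochain X := restr Nᶜ n + cobd (Nᶜ.indicator W)
  -- the behaviour in the three regions
  have hcases : ∀ x, N ∈ 𝓝 x ∨ Nᶜ ∈ 𝓝 x ∨ ∃ z ∈ Metric.sphere (0 : ℂ) r, f z = x := by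
    intro x
    by_cases hx : x ∈ N
    · obtain ⟨z, hz, rfl⟩ := hx
      rcases (mem_closedBall_zero_iff.1 hz).lt_or_eq with h | h
      · refine Or.inl (mem_of_superset ((hf.isOpenMap _ Metric.isOpen_ball).mem_nhds
          ⟨z, mem_ball_zero_iff.2 h, rfl⟩) (image_mono Metric.ball_subset_closedBall))
      · exact Or.inr (Or.inr ⟨z, mem_sphere_zero_iff_norm.2 h, rfl⟩)
    · exact Or.inr (Or.inl (hN.isClosed.isOpen_compl.mem_nhds hx))
  have hn : ∀ z ∈ Metric.sphere (0 : ℂ) r, z ∉ Q → ZeroAt n (f z) := by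
    intro z hz hzQ
    refine zeroAt_of_pull hf.isOpenMap ?_
    have := hw z hz hzQ
    rwa [show w = W ∘ f from funext fun z => (hWf z).symm] at this
  have h1N : ∀ x, N ∈ 𝓝 x → ZeroAt (m₁ + m + cobd W) x := fun x hx => by
    rw [add_assoc]; exact zeroAt_restr_add hx
  have h1N' : ∀ x, Nᶜ ∈ 𝓝 x → ZeroAt m₁ x := fun x hx =>
    zeroAt_of_mem_nhds hx fun a ha b hb => by
      by_contra h; exact ha (suppIn_restr _ _ _ _ h).1
  have h2N : ∀ x, N ∈ 𝓝 x → ZeroAt m₂ x := fun x hx =>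
    zeroAt_of_mem_nhds hx fun a ha b hb => by
      have : restr Nᶜ n a b = 0 := by
        by_contra h; exact (suppIn_restr _ _ _ _ h).1 ha
      simp [m₂, this, cobd, ha, hb]
  have h2N' : ∀ x, Nᶜ ∈ 𝓝 x → ZeroAt (m₂ + m) x := fun x hx =>
    zeroAt_of_mem_nhds hx fun a ha b hb => by
      simp only [m₂, Pi.add_apply, restr_of_mem ha hb, n, cobd, indicator_of_mem ha,
        indicator_of_mem hb]
      grind
  have h2s : ∀ z ∈ Metric.sphere (0 : ℂ) r, z ∉ Q →
      ZeroAt (m₂ + cobd (Nᶜ.indicator W)) (f z) := fun z hz hzQ => by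
    simp only [m₂]
    rw [add_assoc, add_self_cochain, add_zero]
    exact (hn z hz hzQ).restr _
  have hK₂ : {x | ¬ ZeroAt m₂ x} ⊆ K ∪ N := by
    intro x hx
    by_contra hxK
    rw [mem_union, not_or] at hxK
    refine hx ?_
    have := (h2N' x (hN.isClosed.isOpen_compl.mem_nhds hxK.2)).add (hz x hxK.1)
    rwa [add_assoc, add_self_cochain, add_zero] at this
  refine ⟨m₁, m₂, N, {x | ¬ ZeroAt m₂ x}, F ∪ Q.image f, Finset.subset_union_left, hN,
    image_subset_range _ _, fun z hz => (suppIn_restr _ _).zeroAt hN.isClosed hz, ?_,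
    (hK.union hN).of_isClosed_subset (isOpen_zeroAt m₂).isClosed_compl hK₂, ?_,
    fun z hz => not_not.1 hz, ?_, ?_⟩
  · intro x hx
    rw [Finset.mem_union, not_or] at hx
    rcases hcases x with h | h | ⟨z, hz, rfl⟩
    · have := ((h1N x h).closedAt.add (hm x hx.1)).add (closedAt_cobd W x)
      convert this using 1
      ext a b
      simp only [Pi.add_apply]
      grind
    · exact (h1N' x h).closedAt
    · exact ((hn z hz fun hzQ => hx.2 (Finset.mem_image_of_mem f hzQ)).restr _).closedAt
  · intro x hx
    by_contra hxV
    rcases hcases x with h | h | ⟨z, hzs, rfl⟩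
    · exact hx (h2N x h)
    · have hxK : x ∉ K := fun hxK => by
        obtain ⟨z, rfl⟩ := hKV' ⟨hxK, hxV⟩
        have hzr : ¬ r ≤ ‖z‖ := fun hzr => hxV (hsK z hzr hxK)
        exact mem_of_mem_nhds h ⟨z, mem_closedBall_zero_iff.2 (not_le.1 hzr).le, rfl⟩
      have := (h2N' x h).add (hz x hxK)
      rw [add_assoc, add_self_cochain, add_zero] at this
      exact hx this
    · have hev : ∀ᶠ y in 𝓝 (f z), Nᶜ.indicator W y = 0 := by
        rw [← hf.map_nhds_eq, eventually_map]
        filter_upwards [hw0 z hzs hxV] with y hy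
        by_cases hyN : f y ∈ Nᶜ
        · rw [indicator_of_mem hyN, hWf, hy]
        · rw [indicator_of_notMem hyN]
      have := h2s z hzs fun hzQ => hxV (hQ z hzQ).2
      refine hx (this.congr_set hev fun a ha b hb => ?_)
      rw [mem_ofPred_eq] at ha hb
      simp [cobd, ha, hb]
  · intro x hx
    rw [Finset.mem_union, not_or] at hx
    rcases hcases x with h | h | ⟨z, hz, rfl⟩
    · exact (h2N x h).closedAt
    · have := (h2N' x h).closedAt.add (hm x hx.1)
      rwa [add_assoc, add_self_cochain, add_zero] at this
    · exact ⟨_, h2s z hz fun hzQ => hx.2 (Finset.mem_image_of_mem f hzQ)⟩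
  · intro x
    refine ⟨N.indicator W, eventually_nhdsNE_of_finite (Q.image f).finite_toSet ?_ x⟩
    intro y hy
    rcases hcases y with h | h | ⟨z, hz, rfl⟩
    · refine ((h1N y h).add (h2N y h)).congr_set h fun a ha b hb => ?_
      simp only [Pi.add_apply, cobd, indicator_of_mem ha, indicator_of_mem hb]
      grind
    · refine ((h1N' y h).add (h2N' y h)).congr_set h fun a ha b hb => ?_
      simp only [Pi.add_apply, cobd, indicator_of_notMem ha, indicator_of_notMem hb]
      grind
    · have hzQ : z ∉ Q := fun hzQ => hy (Finset.mem_coe.2 (Finset.mem_image_of_mem f hzQ))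
      refine (((hn z hz hzQ).restr N).add ((hn z hz hzQ).add (h2s z hz hzQ))).congr_set univ_mem
        fun a _ b _ => ?_
      have : ∀ a, W a = N.indicator W a + Nᶜ.indicator W a := fun a =>
        (congrFun (indicator_self_add_compl N W) a).symm
      simp only [Pi.add_apply, cobd, m₁, n, this a, this b]
      grind

/-- The residue theorem. -/
theorem sum_res_eq_zero [T2Space X] (hX : LocallyPlane X) (F : Finset X) (m : Cochain X)
    (hm : ∀ z ∉ F, ClosedAt m z) {K : Set X} (hK : IsCompact K) (h : ∀ z ∉ K, ZeroAt m z) :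
    ∑ x ∈ F, res m x = 0 := by
  classical
  choose f hf hf0 using hX
  have key : ∀ (t : Finset X) (F : Finset X) (m : Cochain X), (∀ z ∉ F, ClosedAt m z) →
      ∀ K : Set X, IsCompact K → K ⊆ ⋃ i ∈ t, range (f i) → (∀ z ∉ K, ZeroAt m z) →
      ∑ x ∈ F, res m x = 0 := by
    intro t
    induction t using Finset.induction_on with
    | empty =>
      intro F m _ K _ hKt h
      exact Finset.sum_eq_zero fun x _ => res_eq_zero_of_closedAt
        (h x fun hx => by simpa using hKt hx).closedAt
    | insert i t hi ih =>
      intro F m hm K hK hKt h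
      rw [Finset.set_biUnion_insert] at hKt
      obtain ⟨m₁, m₂, K₁, K₂, F', hFF', hK₁, hK₁f, hz₁, hc₁, hK₂, hK₂V, hz₂, hc₂, hres⟩ :=
        exists_splitting (hf i) (isOpen_biUnion fun j _ => (hf j).isOpen_range) hK hKt hm h
      have e1 := sum_res_of_subset_range (hf i) F' m₁ hc₁ hK₁ hK₁f hz₁
      have e2 := ih F' m₂ hc₂ K₂ hK₂ hK₂V hz₂
      rw [Finset.sum_subset hFF' fun x _ hx => res_eq_zero_of_closedAt (hm x hx)]
      have : ∀ x ∈ F', res m x = res m₁ x + res m₂ x := fun x _ => by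
        rw [← res_add (fun x => ⟨f x, hf x, hf0 x⟩)
          (eventually_nhdsNE_of_finite F'.finite_toSet hc₁ x)
          (eventually_nhdsNE_of_finite F'.finite_toSet hc₂ x)]
        refine res_congr ⟨fun h' => ?_, fun h' => ?_⟩
        · have := (hres x).add h'
          rwa [add_right_comm, add_self_cochain, zero_add] at this
        · have := (hres x).add h'
          rwa [add_assoc, add_self_cochain, add_zero] at this
      rw [Finset.sum_congr rfl this, Finset.sum_add_distrib, e1, e2, add_zero]
  obtain ⟨t, -, ht⟩ := hK.elim_nhds_subcover (fun x => range (f x)) fun x _ =>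
    (hf x).isOpen_range.mem_nhds ⟨0, hf0 x⟩
  exact key t F m hm K hK ht h

theorem LocallyPlane.locallyCompactSpace [T2Space X] (hX : LocallyPlane X) :
    LocallyCompactSpace X := by
  have : WeaklyLocallyCompactSpace X := ⟨fun x => by
    obtain ⟨f, hf, rfl⟩ := hX x
    exact ⟨f '' Metric.closedBall 0 1, (isCompact_closedBall 0 1).image hf.continuous,
      hf.isOpenMap.image_mem_nhds (Metric.closedBall_mem_nhds 0 zero_lt_one)⟩⟩
  infer_instance

/-- A compactly supported cochain with nontrivial residues exactly at `p` and `q`. -/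
def IsDipole (ℓ : Cochain X) (p q : X) : Prop :=
  (∃ C, IsCompact C ∧ SuppIn ℓ C) ∧ (∀ z, z ≠ p → z ≠ q → ClosedAt ℓ z) ∧
    ¬ ResTriv ℓ p ∧ ¬ ResTriv ℓ q

theorem IsDipole.symm {ℓ : Cochain X} {p q : X} (h : IsDipole ℓ p q) : IsDipole ℓ q p :=
  ⟨h.1, fun z hq hp => h.2.1 z hp hq, h.2.2.2, h.2.2.1⟩

theorem IsDipole.closed_off {ℓ : Cochain X} {p q : X} (h : IsDipole ℓ p q) :
    ∀ z ∉ ({p, q} : Set X), ClosedAt ℓ z := fun z hz => by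
  simp only [mem_insert_iff, mem_singleton_iff, not_or] at hz
  exact h.2.1 z hz.1 hz.2

theorem exists_isDipole_of_openEmbedding [T2Space X] {f : ℂ → X} (hf : IsOpenEmbedding f)
    {z w : ℂ} (hzw : z ≠ w) : ∃ ℓ : Cochain X, IsDipole ℓ (f z) (f w) := by
  obtain ⟨ℓ, C, hC, hℓC, hcl, hz, hw⟩ := exists_dipole_complex hzw
  have hinv := Function.leftInverse_invFun hf.injective
  let ℓ' := restr (range f) (pull (Function.invFun f) ℓ)
  have hpull : pull f ℓ' = ℓ := by
    ext a b
    simp only [pull, ℓ', restr_of_mem (mem_range_self (f := f) a) (mem_range_self b), hinv a,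
      hinv b]
  have hsupp : SuppIn ℓ' (f '' C) := by
    intro a b hab
    obtain ⟨⟨a, rfl⟩, ⟨b, rfl⟩⟩ := suppIn_restr _ _ a b hab
    have : ℓ a b ≠ 0 := by rw [← hpull]; exact hab
    exact ⟨mem_image_of_mem f (hℓC a b this).1, mem_image_of_mem f (hℓC a b this).2⟩
  refine ⟨ℓ', ⟨_, hC.image hf.continuous, hsupp⟩, fun x hxz hxw => ?_, ?_, ?_⟩
  · by_cases hx : x ∈ range f
    · obtain ⟨x, rfl⟩ := hx
      rw [← closedAt_pull_iff hf, hpull]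
      exact hcl x (fun h => hxz (h ▸ rfl)) (fun h => hxw (h ▸ rfl))
    · exact (hsupp.zeroAt (hC.image hf.continuous).isClosed
        fun h => hx (image_subset_range _ _ h)).closedAt
  · rwa [← resTriv_pull_iff hf, hpull]
  · rwa [← resTriv_pull_iff hf, hpull]

theorem IsDipole.exists_trans [T2Space X] (hX : LocallyPlane X) {ℓ ℓ' : Cochain X} {p q r : X}
    (h : IsDipole ℓ p q) (h' : IsDipole ℓ' q r) (hpq : p ≠ q) (hqr : q ≠ r) (hpr : p ≠ r) :
    ∃ ℓ'' : Cochain X, IsDipole ℓ'' p r := by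
  have := hX.locallyCompactSpace
  have hadd : ∀ x, res (ℓ + ℓ') x = res ℓ x + res ℓ' x := fun x => res_add hX
    (eventually_nhdsNE_of_finite (Set.toFinite _) h.closed_off x)
    (eventually_nhdsNE_of_finite (Set.toFinite _) h'.closed_off x)
  obtain ⟨⟨C, hC, hℓC⟩, hcl, hp, hq⟩ := h
  obtain ⟨⟨C', hC', hℓC'⟩, hcl', hq', hr'⟩ := h'
  have hres : ResTriv (ℓ + ℓ') q := by
    rw [← res_eq_zero_iff, hadd, res_eq_one_iff.2 hq, res_eq_one_iff.2 hq']; rfl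
  obtain ⟨U, hU, hUq⟩ := exists_compact_mem_nhds q
  obtain ⟨κ, hκU, hκ, hκq⟩ := hres.exists_removal hUq
  refine ⟨ℓ + ℓ' + κ, ⟨C ∪ C' ∪ U, (hC.union hC').union hU, ?_⟩, fun z hzp hzr => ?_, ?_, ?_⟩
  · exact ((hℓC.mono (subset_union_left.trans subset_union_left)).add
      (hℓC'.mono (subset_union_right.trans subset_union_left))).add (hκU.mono subset_union_right)
  · by_cases hzq : z = q
    · rwa [hzq]
    · exact ((hcl z hzp hzq).add (hcl' z hzq hzr)).add (hκ z hzq).closedAt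
  · rw [resTriv_add_iff ((hκ p hpq).eventually.filter_mono nhdsWithin_le_nhds), ← res_eq_zero_iff,
      hadd, res_eq_one_iff.2 hp, res_eq_zero_of_closedAt (hcl' p hpq hpr)]
    simp
  · rw [resTriv_add_iff ((hκ r hqr.symm).eventually.filter_mono nhdsWithin_le_nhds),
      ← res_eq_zero_iff, hadd, res_eq_one_iff.2 hr',
      res_eq_zero_of_closedAt (hcl r hpr.symm hqr.symm)]
    simp

theorem exists_isDipole [T2Space X] [PreconnectedSpace X] (hX : LocallyPlane X) {p q : X}
    (hpq : p ≠ q) : ∃ ℓ : Cochain X, IsDipole ℓ p q := by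
  suffices ∀ p q : X, p = q ∨ ∃ ℓ : Cochain X, IsDipole ℓ p q from (this p q).resolve_left hpq
  intro p q
  have : Std.Symm fun p q : X => p = q ∨ ∃ ℓ : Cochain X, IsDipole ℓ p q := ⟨fun x y h => by
    rcases h with rfl | ⟨ℓ, h⟩
    · exact Or.inl rfl
    · exact Or.inr ⟨ℓ, h.symm⟩⟩
  refine PreconnectedSpace.induction₂ (fun p q : X => p = q ∨ ∃ ℓ : Cochain X, IsDipole ℓ p q)
    (fun x => ?_) ?_ p q
  · obtain ⟨f, hf, rfl⟩ := hX x
    filter_upwards [hf.isOpen_range.mem_nhds ⟨0, rfl⟩]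
    rintro _ ⟨z, rfl⟩
    by_cases hz : z = 0
    · exact Or.inl (hz ▸ rfl)
    · exact Or.inr (exists_isDipole_of_openEmbedding hf (Ne.symm hz))
  · refine ⟨fun x y z h h' => ?_⟩
    by_cases hxy : x = y
    · rwa [hxy]
    by_cases hyz : y = z
    · rwa [← hyz]
    by_cases hxz : x = z
    · exact Or.inl hxz
    obtain ⟨ℓ, hℓ⟩ := h.resolve_left hxy
    obtain ⟨ℓ', hℓ'⟩ := h'.resolve_left hyz
    exact Or.inr (hℓ.exists_trans hX hℓ' hxy hyz hxz)

/-- The sum of a locally finite family of cochains. -/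
noncomputable def locSum {X : Type*} (c : ℤ → Cochain X) : Cochain X := fun a b => ∑ᶠ n, c n a b

section locSum

variable {c : ℤ → Cochain X} {D : ℤ → Set X}

theorem exists_zeroAt_locSum_add_sum (hD : LocallyFinite D) (hc : ∀ n, SuppIn (c n) (D n))
    (x : X) : ∃ A : Finset ℤ, ∀ A' : Finset ℤ, A ⊆ A' →
      ZeroAt (locSum c + ∑ n ∈ A', c n) x := by
  obtain ⟨B, hB, hfin⟩ := hD x
  refine ⟨hfin.toFinset, fun A' hA' => zeroAt_of_mem_nhds hB fun a ha b _ => ?_⟩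
  have : locSum c a b = ∑ n ∈ A', c n a b := finsum_eq_sum_of_support_subset _ fun n hn =>
    hA' (hfin.mem_toFinset.2 ⟨a, (hc n a b hn).1, ha⟩)
  simp only [Pi.add_apply, Finset.sum_apply, this]
  grind

theorem closedAt_sum {A : Finset ℤ} {x : X} (h : ∀ n ∈ A, ClosedAt (c n) x) :
    ClosedAt (∑ n ∈ A, c n) x := by
  classical
  induction A using Finset.induction_on with
  | empty => simpa using (zeroAt_zero x).closedAt
  | insert i A hi ih =>
    rw [Finset.sum_insert hi]
    exact (h i (by simp)).add (ih fun n hn => h n (by simp [hn]))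

theorem zeroAt_sum {A : Finset ℤ} {x : X} (h : ∀ n ∈ A, ZeroAt (c n) x) :
    ZeroAt (∑ n ∈ A, c n) x := by
  classical
  induction A using Finset.induction_on with
  | empty => simpa using zeroAt_zero x
  | insert i A hi ih =>
    rw [Finset.sum_insert hi]
    exact (h i (by simp)).add (ih fun n hn => h n (by simp [hn]))

theorem closedAt_locSum_add_sum (hD : LocallyFinite D) (hc : ∀ n, SuppIn (c n) (D n)) {x : X}
    (P : Finset ℤ) (h : ∀ n ∉ P, ClosedAt (c n) x) : ClosedAt (locSum c + ∑ n ∈ P, c n) x := by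
  classical
  obtain ⟨A, hA⟩ := exists_zeroAt_locSum_add_sum hD hc x
  have h1 := (hA (A ∪ P) Finset.subset_union_left).closedAt
  have h2 := closedAt_sum (A := (A ∪ P) \ P) fun n hn => h n (Finset.mem_sdiff.1 hn).2
  have h3 := h1.add h2
  rw [← Finset.sum_sdiff (Finset.subset_union_right (s₁ := A) (s₂ := P))] at h3
  convert h3 using 1
  ext a b
  simp only [Pi.add_apply]
  grind

theorem zeroAt_locSum (hD : LocallyFinite D) (hc : ∀ n, SuppIn (c n) (D n)) {x : X}
    (h : ∀ n, ZeroAt (c n) x) : ZeroAt (locSum c) x := by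
  obtain ⟨A, hA⟩ := exists_zeroAt_locSum_add_sum hD hc x
  have := (hA A subset_rfl).add (zeroAt_sum (A := A) fun n _ => h n)
  rwa [add_assoc, add_self_cochain, add_zero] at this

theorem closedAt_locSum (hD : LocallyFinite D) (hc : ∀ n, SuppIn (c n) (D n)) {x : X}
    (P : Finset ℤ) (hP : ClosedAt (∑ n ∈ P, c n) x) (h : ∀ n ∉ P, ClosedAt (c n) x) :
    ClosedAt (locSum c) x := by
  have := (closedAt_locSum_add_sum hD hc P h).add hP
  rwa [add_assoc, add_self_cochain, add_zero] at this

theorem locSum_add {c' : ℤ → Cochain X} (hD : LocallyFinite D) (hc : ∀ n, SuppIn (c n) (D n))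
    (hc' : ∀ n, SuppIn (c' n) (D n)) : locSum (c + c') = locSum c + locSum c' := by
  ext a b
  exact finsum_add_distrib ((hD.point_finite a).subset fun n hn => (hc n a b hn).1)
    ((hD.point_finite a).subset fun n hn => (hc' n a b hn).1)

end locSum

/-- A dipole along an orbit whose translates can be summed up to a closed cochain. -/
theorem exists_isDipole_closedAt_add [T2Space X] [PreconnectedSpace X] (hX : LocallyPlane X)
    (T : X ≃ₜ X) {p : X} (hp : T p ≠ p) :
    ∃ ℓ : Cochain X, IsDipole ℓ p (T p) ∧ ClosedAt (ℓ + pull T ℓ) p := by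
  have := hX.locallyCompactSpace
  obtain ⟨ℓ, hℓ⟩ := exists_isDipole hX hp.symm
  have hcl : ∀ᶠ y in 𝓝[≠] p, ClosedAt (pull T ℓ) y := by
    refine eventually_nhdsNE_of_finite ((Set.toFinite {p, T p}).preimage T.injective.injOn)
      (fun y hy => ?_) p
    exact ClosedAt.pull T.continuous.continuousAt (hℓ.closed_off _ hy)
  have hres : ResTriv (ℓ + pull T ℓ) p := by
    rw [← res_eq_zero_iff, res_add hX
      (eventually_nhdsNE_of_finite (Set.toFinite _) hℓ.closed_off p) hcl,
      res_eq_one_iff.2 hℓ.2.2.1, res_eq_one_iff.2]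
    · rfl
    · rw [resTriv_pull_iff T.isOpenEmbedding]
      exact hℓ.2.2.2
  obtain ⟨U, hU, hUp⟩ := exists_compact_mem_nhds p
  obtain ⟨κ, hκU, hκ, hκp⟩ := hres.exists_removal hUp
  obtain ⟨⟨C, hC, hℓC⟩, hcl, h1, h2⟩ := hℓ
  have hκne : ∀ x, ∀ᶠ y in 𝓝[≠] x, ZeroAt κ y := fun x =>
    eventually_nhdsNE_of_finite (Set.finite_singleton p) (fun y hy => hκ y hy) x
  refine ⟨ℓ + κ, ⟨⟨C ∪ U, hC.union hU, (hℓC.mono subset_union_left).add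
    (hκU.mono subset_union_right)⟩, fun z hzp hzT => (hcl z hzp hzT).add (hκ z hzp).closedAt,
    ?_, ?_⟩, ?_⟩
  · rwa [resTriv_add_iff (hκne _)]
  · rwa [resTriv_add_iff (hκne _)]
  · have : ClosedAt (pull T κ) p :=
      ClosedAt.pull T.continuous.continuousAt (hκ _ hp).closedAt
    convert hκp.add this using 1
    rw [pull_add]
    abel

/-- A group with an almost invariant function separating the two ends of an infinite cyclic
subgroup does not act properly and cocompactly on a simply connected surface. -/
theorem false_of_almostInvariant [T2Space X] [PreconnectedSpace X] [Nonempty X]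
    (hX : LocallyPlane X)
    (hex : ∀ m : Cochain X, (∀ y, ClosedAt m y) → ∃ u, ∀ y, ZeroAt (m + cobd u) y)
    {Γ : Type*} [Group Γ] [MulAction Γ X] [ContinuousConstSMul Γ X]
    (hproper : ∀ C C' : Set X, IsCompact C → IsCompact C' → {g : Γ | ∃ x ∈ C, g • x ∈ C'}.Finite)
    {C : Set X} (hC : IsCompact C) (hCX : ∀ x : X, ∃ g : Γ, g⁻¹ • x ∈ C)
    (e : Γ → ZMod 2) (he : ∀ k, {g | e (g * k) ≠ e g}.Finite) (t : Γ)
    (ht₁ : ∀ n : ℤ, 0 < n → e (t ^ n) = 1) (ht₀ : ∀ n : ℤ, n ≤ 0 → e (t ^ n) = 0) : False := by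
  have := hX.locallyCompactSpace
  have htinj : Function.Injective fun n : ℤ => t ^ n := by
    refine injective_zpow_iff_not_isOfFinOrder.2 fun hfin => ?_
    obtain ⟨n, hn, hn'⟩ := isOfFinOrder_iff_pow_eq_one.1 hfin
    have h1 := ht₁ n (by exact_mod_cast hn)
    have h0 := ht₀ 0 le_rfl
    rw [zpow_natCast, hn'] at h1
    rw [zpow_zero] at h0
    rw [h0] at h1
    exact zero_ne_one h1
  obtain ⟨p⟩ := ‹Nonempty X›
  have hfree : ∀ n : ℤ, n ≠ 0 → t ^ n • p ≠ p := by
    intro n hn hfix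
    have hfin := hproper {p} {p} isCompact_singleton isCompact_singleton
    refine Set.infinite_range_of_injective
      (f := fun k : ℤ => t ^ (n * k)) (fun i j hij => ?_) (hfin.subset ?_)
    · exact mul_left_cancel₀ hn (htinj hij)
    · rintro _ ⟨k, rfl⟩
      refine ⟨p, rfl, ?_⟩
      have : t ^ n ∈ MulAction.stabilizer Γ p := hfix
      have := Subgroup.zpow_mem _ this k
      simpa [zpow_mul] using this
  have hfree' : ∀ i j : ℤ, t ^ i • p = t ^ j • p → i = j := fun i j hij => by
    by_contra hne
    refine hfree (i - j) (sub_ne_zero.2 hne) ?_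
    rw [sub_eq_neg_add, zpow_add, mul_smul, hij, ← mul_smul, ← zpow_add, neg_add_cancel, zpow_zero,
      one_smul]
  obtain ⟨ℓ, ⟨⟨C₀, hC₀, hℓC₀⟩, hℓcl, hℓp, -⟩, hℓadd⟩ :=
    exists_isDipole_closedAt_add hX (Homeomorph.smul t) (p := p)
      (by simpa using hfree 1 one_ne_zero)
  let c : ℤ → Cochain X := fun n => pull (fun y => t ^ (-n) • y) ℓ
  let D : ℤ → Set X := fun n => (fun y => t ^ n • y) '' C₀
  have hcD : ∀ n, SuppIn (c n) (D n) := fun n a b hab =>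
    ⟨⟨_, (hℓC₀ _ _ hab).1, by simp [smul_smul]⟩, ⟨_, (hℓC₀ _ _ hab).2, by simp [smul_smul]⟩⟩
  have hDc : ∀ n, IsClosed (D n) := fun n => (hC₀.image (continuous_const_smul _)).isClosed
  have hD : LocallyFinite D := fun x => by
    obtain ⟨B, hB, hBx⟩ := exists_compact_mem_nhds x
    refine ⟨B, hBx, ((hproper C₀ B hC₀ hB).preimage htinj.injOn).subset ?_⟩
    rintro n ⟨_, ⟨y, hy, rfl⟩, hyB⟩
    exact ⟨y, hy, hyB⟩
  have hccl : ∀ n x, x ≠ t ^ n • p → x ≠ t ^ (n + 1) • p → ClosedAt (c n) x := by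
    intro n x h1 h2
    refine ClosedAt.pull (continuous_const_smul _).continuousAt (hℓcl _ (fun h => h1 ?_)
      fun h => h2 ?_)
    · rw [← h]; simp [smul_smul]
    · have : t ^ n • t ^ (-n) • x = t ^ n • t • p := congrArg (t ^ n • ·) h
      rw [smul_smul, smul_smul] at this
      simpa [zpow_add] using this
  have hcadd : ∀ n, ClosedAt (c n + c (n - 1)) (t ^ n • p) := by
    intro n
    have h1 : ClosedAt (ℓ + pull (Homeomorph.smul t) ℓ) (t ^ (-n) • t ^ n • p) := by
      simpa [smul_smul] using hℓadd
    convert ClosedAt.pull (f := fun y => t ^ (-n) • y) (continuous_const_smul _).continuousAt h1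
      using 1
    have : ∀ y : X, t ^ (-(n - 1)) • y = t • t ^ (-n) • y := fun y => by
      rw [smul_smul, ← zpow_one_add]
      congr 2
      ring
    ext a b
    simp only [c, pull, Pi.add_apply, this]
    rfl
  -- the sums over all translates, and over the positive and the negative ones
  let cp : ℤ → Cochain X := fun n => if 0 ≤ n then c n else 0
  let cm : ℤ → Cochain X := fun n => if 0 ≤ n then 0 else c n
  have hcpD : ∀ n, SuppIn (cp n) (D n) := fun n a b h => by
    by_cases hn : 0 ≤ n
    · simp only [cp, if_pos hn] at h; exact hcD n a b h
    · simp [cp, if_neg hn] at h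
  have hcmD : ∀ n, SuppIn (cm n) (D n) := fun n a b h => by
    by_cases hn : 0 ≤ n
    · simp [cm, if_pos hn] at h
    · simp only [cm, if_neg hn] at h; exact hcD n a b h
  have hsum : locSum c = locSum cp + locSum cm := by
    rw [← locSum_add hD hcpD hcmD]
    congr 1
    ext n a b
    by_cases hn : 0 ≤ n <;> simp [cp, cm, hn]
  have hLcl : ∀ x, ClosedAt (locSum c) x := by
    intro x
    by_cases hx : ∃ n : ℤ, x = t ^ n • p
    · obtain ⟨n, rfl⟩ := hx
      refine closedAt_locSum hD hcD {n, n - 1} ?_ fun k hk => ?_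
      · rw [Finset.sum_pair (by omega)]
        exact hcadd n
      · simp only [Finset.mem_insert, Finset.mem_singleton, not_or] at hk
        exact hccl k _ (fun h => hk.1 (hfree' _ _ h).symm)
          (fun h => hk.2 (by have := hfree' _ _ h; omega))
    · push Not at hx
      exact closedAt_locSum hD hcD ∅ (by simpa using (zeroAt_zero x).closedAt)
        fun n _ => hccl n x (hx _) (hx _)
  have hcpcl : ∀ n x, (0 ≤ n → ClosedAt (c n) x) → ClosedAt (cp n) x := fun n x h => by
    by_cases hn : 0 ≤ n
    · simp only [cp, if_pos hn]; exact h hn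
    · simp only [cp, if_neg hn]; exact (zeroAt_zero x).closedAt
  have hLpcl : ∀ x ≠ p, ClosedAt (locSum cp) x := by
    intro x hxp
    by_cases hx : ∃ n : ℤ, 0 < n ∧ x = t ^ n • p
    · obtain ⟨n, hn, rfl⟩ := hx
      refine closedAt_locSum hD hcpD {n, n - 1} ?_ fun k hk => ?_
      · rw [Finset.sum_pair (by omega)]
        simp only [cp, if_pos hn.le, if_pos (show 0 ≤ n - 1 by omega)]
        exact hcadd n
      · simp only [Finset.mem_insert, Finset.mem_singleton, not_or] at hk
        exact hcpcl k _ fun _ => hccl k _ (fun h => hk.1 (hfree' _ _ h).symm)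
          (fun h => hk.2 (by have := hfree' _ _ h; omega))
    · push Not at hx
      refine closedAt_locSum hD hcpD ∅ (by simpa using (zeroAt_zero x).closedAt)
        fun n _ => hcpcl n x fun hn => hccl n x ?_ (hx _ (by omega))
      rcases hn.eq_or_lt with rfl | hn
      · simpa using hxp
      · exact hx n hn
  have hLpres : ¬ ResTriv (locSum cp) p := by
    intro h
    have h1 : ClosedAt (locSum cp + ∑ n ∈ ({0} : Finset ℤ), cp n) p := by
      refine closedAt_locSum_add_sum hD hcpD {0} fun n hn => hcpcl n p fun hn0 => ?_
      rw [Finset.mem_singleton] at hn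
      exact hccl n p (hfree n hn).symm (hfree _ (by omega)).symm
    have h2 := h.add h1.resTriv
    rw [← add_assoc, add_self_cochain, zero_add, Finset.sum_singleton] at h2
    have hcp : cp 0 = ℓ := by ext a b; simp [cp, c, pull]
    exact hℓp (hcp ▸ h2)
  obtain ⟨ψ, hψ⟩ := hex _ hLcl
  -- the function induced on `X` by the almost invariant function
  obtain ⟨C', hC', hCC'⟩ := exists_compact_superset (hC.union hC₀)
  choose r hr using hCX
  let φ : X → ZMod 2 := fun x => e (r x)
  let bad : Set Γ := ⋃ k ∈ {k : Γ | ∃ x ∈ C, k • x ∈ C'}, {g | e (g * k) ≠ e g}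
  have hbad : bad.Finite := (hproper C C' hC hC').biUnion fun k _ => he k
  have hφ : ∀ g ∉ bad, ∀ x, g⁻¹ • x ∈ C' → φ x = e g := by
    intro g hg x hx
    by_contra hne
    refine hg (mem_iUnion₂.2 ⟨g⁻¹ * r x, ⟨(r x)⁻¹ • x, hr x, ?_⟩, ?_⟩)
    · simpa [smul_smul] using hx
    · simpa using hne
  let K : Set X := C' ∪ ⋃ g ∈ bad, (fun y => g • y) '' C'
  have hK : IsCompact K := hC'.union
    (hbad.isCompact_biUnion fun g _ => hC'.image (continuous_const_smul g))
  have hnK : ∀ x ∉ K, ∀ g : Γ, g⁻¹ • x ∈ C' → g ∉ bad := fun x hx g hg hgb =>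
    hx (Or.inr (mem_iUnion₂.2 ⟨g, hgb, _, hg, by simp⟩))
  have hφloc : ∀ x ∉ K, ∀ᶠ y in 𝓝 x, φ y = φ x := by
    intro x hx
    have h1 : (r x)⁻¹ • x ∈ interior C' := hCC' (Or.inl (hr x))
    have h2 := hnK x hx _ (interior_subset h1)
    have h3 : (fun y : X => (r x)⁻¹ • y) ⁻¹' interior C' ∈ 𝓝 x :=
      (continuous_const_smul _).continuousAt.preimage_mem_nhds (isOpen_interior.mem_nhds h1)
    filter_upwards [h3] with y hy
    exact hφ _ h2 y (interior_subset hy)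
  have hφD : ∀ x ∉ K, ∀ n, x ∈ D n → n ≠ 0 ∧ φ x = e (t ^ n) := by
    rintro x hx n ⟨y, hy, rfl⟩
    have hyC' : y ∈ C' := interior_subset (hCC' (Or.inr hy))
    have h1 : (t ^ n)⁻¹ • t ^ n • y ∈ C' := by simpa using hyC'
    refine ⟨?_, hφ _ (hnK _ hx _ h1) _ h1⟩
    rintro rfl
    exact hx (Or.inl (by simpa using hyC'))
  let M : Cochain X := locSum cp + cobd (φ * ψ)
  have hM := sum_res_eq_zero hX {p} M (fun z hz => (hLpcl z (by simpa using hz)).add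
    (closedAt_cobd _ z)) hK fun x hx => ?_
  · rw [Finset.sum_singleton, res_eq_zero_iff] at hM
    refine hLpres ?_
    have := hM.add (resTriv_cobd (φ * ψ) p)
    rwa [add_assoc, add_self_cochain, add_zero] at this
  · have hx2 : φ x = 0 ∨ φ x = 1 := by
      generalize φ x = a; revert a; decide
    rcases hx2 with hx0 | hx1
    · have : ZeroAt (locSum cp) x := zeroAt_locSum hD hcpD fun n => by
        by_cases hxD : x ∈ D n
        · have h1 := hφD x hx n hxD
          have hn : ¬ 0 ≤ n := fun hn => by
            rw [hx0, ht₁ n (by omega)] at h1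
            exact zero_ne_one h1.2
          simp only [cp, if_neg hn]
          exact zeroAt_zero x
        · exact (hcpD n).zeroAt (hDc n) hxD
      refine this.congr_set (hφloc x hx) fun a ha b hb => ?_
      rw [mem_ofPred_eq] at ha hb
      simp [M, cobd, ha, hb, hx0]
    · have : ZeroAt (locSum cm) x := zeroAt_locSum hD hcmD fun n => by
        by_cases hxD : x ∈ D n
        · have h1 := hφD x hx n hxD
          have hn : 0 ≤ n := by
            by_contra hn
            rw [hx1, ht₀ n (by omega)] at h1
            exact one_ne_zero h1.2
          simp only [cm, if_pos hn]
          exact zeroAt_zero x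
        · exact (hcmD n).zeroAt (hDc n) hxD
      refine (this.add (hψ x)).congr_set (hφloc x hx) fun a ha b hb => ?_
      rw [mem_ofPred_eq] at ha hb
      simp only [M, hsum, cobd, Pi.add_apply, Pi.mul_apply, ha, hb, hx1, one_mul]
      grind

end AlexanderSpanier

namespace Monoid.Coprod

variable {G H : Type*} [Group G] [Group H]

open Classical in
/-- Right translations of the free product, twisted along the second factor by the coboundary of
the indicator function of the identity. -/
noncomputable def twistedTranslation :
    Monoid.Coprod G H →* Equiv.Perm (Monoid.Coprod G H × ZMod 2) :=
  Monoid.Coprod.lift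
    { toFun := fun k =>
        { toFun := fun x => (x.1 * (inl k)⁻¹, x.2)
          invFun := fun x => (x.1 * inl k, x.2)
          left_inv := fun x => by simp
          right_inv := fun x => by simp }
      map_one' := by ext x <;> simp
      map_mul' := fun k l => by ext x <;> simp [mul_assoc] }
    { toFun := fun k =>
        { toFun := fun x => (x.1 * (inr k)⁻¹,
            x.2 + (if x.1 = 1 then 1 else 0) + (if x.1 * (inr k)⁻¹ = 1 then 1 else 0))
          invFun := fun x => (x.1 * inr k,
            x.2 + (if x.1 = 1 then 1 else 0) + (if x.1 * inr k = 1 then 1 else 0))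
          left_inv := fun x => by ext <;> simp; grind
          right_inv := fun x => by ext <;> simp; grind }
      map_one' := by ext x <;> simp; grind
      map_mul' := fun k l => by ext x <;> simp [mul_assoc]; grind }

/-- The almost invariant function on a free product vanishing at the identity, right invariant
under the first factor and jumping only at the identity under the second. -/
noncomputable def jump (g : Monoid.Coprod G H) : ZMod 2 := (twistedTranslation g⁻¹ (1, 0)).2

theorem twistedTranslation_fst (g : Monoid.Coprod G H) (x : Monoid.Coprod G H × ZMod 2) :
    (twistedTranslation g x).1 = x.1 * g⁻¹ := by
  induction g using Monoid.Coprod.induction_on generalizing x with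
  | inl k => simp [twistedTranslation]
  | inr k => simp [twistedTranslation]
  | mul g h ihg ihh => simp [ihg, ihh, mul_assoc]

@[simp]
theorem jump_one : jump (1 : Monoid.Coprod G H) = 0 := by simp [jump]

theorem jump_mul_inl (g : Monoid.Coprod G H) (k : G) : jump (g * inl k) = jump g := by
  rw [jump, mul_inv_rev, map_mul, Equiv.Perm.mul_apply, ← map_inv]
  simp [jump, twistedTranslation]

open Classical in
theorem jump_mul_inr (g : Monoid.Coprod G H) (k : H) :
    jump (g * inr k) = jump g + (if g = 1 then 1 else 0) + (if g * inr k = 1 then 1 else 0) := by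
  have h := twistedTranslation_fst g⁻¹ (1, 0)
  rw [inv_inv, one_mul] at h
  rw [jump, mul_inv_rev, map_mul, Equiv.Perm.mul_apply, ← map_inv]
  conv_lhs => rw [twistedTranslation, Monoid.Coprod.lift_apply_inr, ← twistedTranslation]
  have hk : (inr k⁻¹ : Monoid.Coprod G H)⁻¹ = inr k := by simp
  simp [h, hk, jump, -map_inv]

theorem finite_jump_mul_ne (k : Monoid.Coprod G H) : {g | jump (g * k) ≠ jump g}.Finite := by
  induction k using Monoid.Coprod.induction_on with
  | inl k => simp [jump_mul_inl]
  | inr k =>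
    refine (Set.toFinite {1, (inr k)⁻¹}).subset fun g hg => ?_
    by_contra hne
    simp only [mem_insert_iff, mem_singleton_iff, not_or, ← mul_eq_one_iff_eq_inv] at hne
    exact hg (by simp [jump_mul_inr, hne])
  | mul k l ihk ihl =>
    refine (ihk.union (ihl.preimage (mul_left_injective k).injOn)).subset fun g hg => ?_
    by_contra hne
    simp only [mem_union, mem_preimage, mem_ofPred_eq, not_or, not_not] at hne
    exact hg (by rw [← mul_assoc, hne.2, hne.1])

section

variable {a : G} {b : H}

theorem not_commute_inl_inr (ha : a ≠ 1) (hb : b ≠ 1) :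
    ¬ Commute (inl a : Monoid.Coprod G H) (inr b) := by
  classical
  intro h
  have h1 : jump (inl a * inr b : Monoid.Coprod G H) = 0 := by
    have hab : (inl a * inr b : Monoid.Coprod G H) ≠ 1 := fun hab => ha (by
      simpa using congrArg Monoid.Coprod.fst hab)
    have ha' : (inl a : Monoid.Coprod G H) ≠ 1 := fun h => ha (by
      simpa using congrArg Monoid.Coprod.fst h)
    have := jump_mul_inl (1 : Monoid.Coprod G H) a
    rw [one_mul] at this
    rw [jump_mul_inr, this, if_neg ha', if_neg hab]
    simp
  have hb' : (inr b : Monoid.Coprod G H) ≠ 1 := fun h => hb (by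
    simpa using congrArg Monoid.Coprod.snd h)
  have h2 := jump_mul_inr (1 : Monoid.Coprod G H) b
  rw [h.eq, jump_mul_inl, ← one_mul (inr b), h2] at h1
  simp [hb'] at h1

theorem zpow_mul_inl_ne_one (ha : a ≠ 1) (hb : b ≠ 1) (n : ℤ) :
    ((inl a * inr b) ^ n * inl a : Monoid.Coprod G H) ≠ 1 := by
  intro h
  have h1 : Commute (inl a : Monoid.Coprod G H) (inl a * inr b) := by
    have h2 := ((Commute.refl (inl a * inr b : Monoid.Coprod G H)).zpow_left n).inv_left
    rwa [← eq_inv_of_mul_eq_one_right h] at h2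
  refine not_commute_inl_inr ha hb ?_
  have := (Commute.refl (inl a : Monoid.Coprod G H)).inv_right.mul_right h1
  simpa using this

open Classical in
theorem jump_zpow_add_one (ha : a ≠ 1) (hb : b ≠ 1) (n : ℤ) :
    jump ((inl a * inr b : Monoid.Coprod G H) ^ (n + 1)) =
      jump ((inl a * inr b : Monoid.Coprod G H) ^ n) +
        (if (inl a * inr b : Monoid.Coprod G H) ^ (n + 1) = 1 then 1 else 0) := by
  rw [zpow_add_one, ← mul_assoc, jump_mul_inr, jump_mul_inl,
    if_neg (zpow_mul_inl_ne_one ha hb n), add_zero]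

theorem jump_zpow_of_forall_ne (ha : a ≠ 1) (hb : b ≠ 1) {n : ℕ}
    (h : ∀ k : ℕ, 0 < k → k ≤ n → (inl a * inr b : Monoid.Coprod G H) ^ k ≠ 1) :
    jump ((inl a * inr b : Monoid.Coprod G H) ^ n) = 0 := by
  induction n with
  | zero => simp
  | succ n ih =>
    have h1 := jump_zpow_add_one (a := a) (b := b) ha hb n
    rw [← Nat.cast_succ, zpow_natCast, zpow_natCast, if_neg (h _ n.succ_pos le_rfl), add_zero,
      ih fun k hk hkn => h k hk (hkn.trans n.le_succ)] at h1
    exact h1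

theorem pow_inl_mul_inr_ne_one (ha : a ≠ 1) (hb : b ≠ 1) {n : ℕ} (hn : 0 < n) :
    (inl a * inr b : Monoid.Coprod G H) ^ n ≠ 1 := by
  classical
  intro h
  have hex : ∃ n : ℕ, 0 < n ∧ (inl a * inr b : Monoid.Coprod G H) ^ n = 1 := ⟨n, hn, h⟩
  obtain ⟨hpos, hone⟩ := Nat.find_spec hex
  obtain ⟨m, hm⟩ := Nat.exists_eq_succ_of_ne_zero hpos.ne'
  rw [hm] at hone
  have h0 := jump_zpow_of_forall_ne (n := m) ha hb fun k hk hkm hk1 =>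
    Nat.find_min hex (m := k) (by omega) ⟨hk, hk1⟩
  have h1 := jump_zpow_add_one (a := a) (b := b) ha hb m
  rw [← Nat.cast_succ, zpow_natCast, zpow_natCast, h0, hone] at h1
  simp at h1

theorem jump_zpow_neg (ha : a ≠ 1) (hb : b ≠ 1) {n : ℤ} (hn : n < 0) :
    jump ((inl a * inr b : Monoid.Coprod G H) ^ n) = 1 := by
  induction n, (Int.le_sub_one_of_lt hn) using Int.leInductionDown with
  | base =>
    have h1 := jump_zpow_add_one (a := a) (b := b) ha hb (-1)
    simp at h1 ⊢
    grind
  | pred n hn ih =>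
    have h1 := jump_zpow_add_one (a := a) (b := b) ha hb (n - 1)
    have h2 : (inl a * inr b : Monoid.Coprod G H) ^ n ≠ 1 := by
      obtain ⟨m, rfl⟩ := Int.exists_eq_neg_ofNat (show n ≤ 0 by omega)
      simpa using pow_inl_mul_inr_ne_one ha hb (show 0 < m by omega)
    rw [sub_add_cancel, if_neg h2, add_zero, ih (by omega)] at h1
    exact h1.symm

end

/-- A nontrivial free product has an almost invariant function separating the two ends of an
infinite cyclic subgroup. -/
theorem exists_almostInvariant (G H : Type*) [Group G] [Group H] [Nontrivial G] [Nontrivial H] :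
    ∃ (e : Monoid.Coprod G H → ZMod 2) (t : Monoid.Coprod G H),
      (∀ k, {g | e (g * k) ≠ e g}.Finite) ∧ (∀ n : ℤ, 0 < n → e (t ^ n) = 1) ∧
        ∀ n : ℤ, n ≤ 0 → e (t ^ n) = 0 := by
  obtain ⟨a, ha⟩ := exists_ne (1 : G)
  obtain ⟨b, hb⟩ := exists_ne (1 : H)
  refine ⟨jump, (inl a * inr b)⁻¹, finite_jump_mul_ne, fun n hn => ?_, fun n hn => ?_⟩
  · rw [inv_zpow']
    exact jump_zpow_neg ha hb (by omega)
  · obtain ⟨m, rfl⟩ := Int.exists_eq_neg_ofNat hn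
    rw [inv_zpow', neg_neg, zpow_natCast]
    exact jump_zpow_of_forall_ne ha hb fun k hk _ => pow_inl_mul_inr_ne_one ha hb hk

end Monoid.Coprod

namespace FiberBundleCore

variable {ι B F : Type*} [TopologicalSpace B] [TopologicalSpace F] [DiscreteTopology F]
  {Z : FiberBundleCore ι B F}

theorem eventually_localTriv_snd_eq {i : ι} {x : Z.TotalSpace} (hx : x.1 ∈ Z.baseSet i) :
    ∀ᶠ y in 𝓝 x, (Z.localTriv i y).2 = (Z.localTriv i x).2 := by
  have h : ContinuousAt (fun y => (Z.localTriv i y).2) x :=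
    continuous_snd.continuousAt.comp ((Z.localTriv i).continuousAt
      ((Z.mem_localTriv_source i x).2 hx))
  rwa [ContinuousAt, nhds_discrete F, tendsto_pure] at h

theorem t2Space [T2Space B] : T2Space Z.TotalSpace where
  t2 x y hxy := by
    by_cases h : Z.proj x = Z.proj y
    · exact Z.isCoveringMap_proj.isSeparatedMap x y h hxy
    · exact separated_by_continuous Z.continuous_proj h

end FiberBundleCore

section PrincipalCore

variable {ι B G : Type*} [TopologicalSpace B] [Group G] [TopologicalSpace G]

/-- Left multiplication on the fibres of a bundle whose fibre is a group. -/
instance FiberBundleCore.mulActionTotalSpace (Z : FiberBundleCore ι B G) :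
    MulAction G Z.TotalSpace where
  smul h x := ⟨x.1, h * (show G from x.2)⟩
  one_smul x := congrArg (Bundle.TotalSpace.mk (E := Z.Fiber) x.1) (one_mul (show G from x.2))
  mul_smul g h x :=
    congrArg (Bundle.TotalSpace.mk (E := Z.Fiber) x.1) (mul_assoc g h (show G from x.2))

namespace FiberBundleCore

variable (Z : FiberBundleCore ι B G)

/-- The coordinate changes commute with left multiplication. -/
def IsPrincipal : Prop :=
  ∀ i j y g h, Z.coordChange i j y (h * g) = h * Z.coordChange i j y g

variable {Z}

theorem localTriv_smul (hZ : Z.IsPrincipal) (i : ι) (h : G) (x : Z.TotalSpace) :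
    Z.localTriv i (h • x) = (x.1, h * (Z.localTriv i x).2) := by
  rw [localTriv_apply, localTriv_apply]
  exact congrArg (Prod.mk x.1) (hZ _ _ _ (show G from x.2) h)

theorem exists_isCompact_forall_smul_mem [CompactSpace B] [LocallyCompactSpace B]
    (hZ : Z.IsPrincipal) :
    ∃ C : Set Z.TotalSpace, IsCompact C ∧ ∀ x, ∃ g : G, g⁻¹ • x ∈ C := by
  have key : ∃ C : Set Z.TotalSpace, IsCompact C ∧
      ∀ x : Z.TotalSpace, x.1 ∈ (univ : Set B) → ∃ g : G, g⁻¹ • x ∈ C := by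
    refine isCompact_univ.induction_on
      (p := fun A => ∃ C : Set Z.TotalSpace, IsCompact C ∧
        ∀ x : Z.TotalSpace, x.1 ∈ A → ∃ g : G, g⁻¹ • x ∈ C)
      ⟨∅, isCompact_empty, by simp⟩ ?_ ?_ ?_
    · rintro A A' hA ⟨C, hC, h⟩
      exact ⟨C, hC, fun x hx => h x (hA hx)⟩
    · rintro A A' ⟨C, hC, h⟩ ⟨C', hC', h'⟩
      refine ⟨C ∪ C', hC.union hC', fun x hx => ?_⟩
      rcases hx with hx | hx
      · exact (h x hx).imp fun g => Or.inl
      · exact (h' x hx).imp fun g => Or.inr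
    · intro y _
      let i := Z.indexAt y
      obtain ⟨K, hK, hKi, hKc⟩ := local_compact_nhds
        ((Z.isOpen_baseSet i).mem_nhds (Z.mem_baseSet_at y))
      refine ⟨K, mem_nhdsWithin_of_mem_nhds hK,
        (Z.localTriv i).toOpenPartialHomeomorph.symm '' (K ×ˢ {1}), ?_, fun x hx => ?_⟩
      · refine (hKc.prod isCompact_singleton).image_of_continuousOn
          ((Z.localTriv i).toOpenPartialHomeomorph.continuousOn_symm.mono ?_)
        rintro ⟨z, g⟩ ⟨hz, -⟩
        exact (Z.mem_localTriv_target i _).2 (hKi hz)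
      · refine ⟨(Z.localTriv i x).2, (x.1, 1), ⟨hx, rfl⟩, ?_⟩
        have h1 := localTriv_smul hZ i ((Z.localTriv i x).2)⁻¹ x
        rw [inv_mul_cancel] at h1
        rw [← h1]
        exact (Z.localTriv i).toOpenPartialHomeomorph.left_inv
          ((Z.mem_localTriv_source i _).2 (hKi hx))
  exact key.imp fun C hC => ⟨hC.1, fun x => hC.2 x trivial⟩

variable [DiscreteTopology G]

theorem continuousConstSMul (hZ : Z.IsPrincipal) : ContinuousConstSMul G Z.TotalSpace where
  continuous_const_smul h := by
    rw [continuous_iff_continuousAt]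
    intro x
    let i := Z.indexAt x.1
    have hx : x.1 ∈ Z.baseSet i := Z.mem_baseSet_at _
    rw [(Z.localTriv i).toOpenPartialHomeomorph.continuousAt_iff_continuousAt_comp_left
      (f := fun y : Z.TotalSpace => h • y)]
    · have : ContinuousAt (fun y : Z.TotalSpace =>
          ((Z.localTriv i y).1, h * (Z.localTriv i y).2)) x :=
        ContinuousAt.comp (g := fun q : B × G => (q.1, h * q.2))
          (by have : Continuous fun g : G => h * g := continuous_of_discreteTopology
              fun_prop)
          ((Z.localTriv i).continuousAt ((Z.mem_localTriv_source i x).2 hx))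
      exact this.congr (Eventually.of_forall fun y => (localTriv_smul hZ i h y).symm)
    · exact (Z.continuous_proj.continuousAt (x := x)).preimage_mem_nhds
        ((Z.isOpen_baseSet i).mem_nhds hx)

theorem finite_setOf_smul_mem [T2Space B] (hZ : Z.IsPrincipal) {C C' : Set Z.TotalSpace}
    (hC : IsCompact C) (hC' : IsCompact C') : {g : G | ∃ x ∈ C, g • x ∈ C'}.Finite := by
  suffices {g : G | ∃ q ∈ C ×ˢ C', g • q.1 = q.2}.Finite from
    this.subset fun g ⟨x, hx, hgx⟩ => ⟨(x, g • x), ⟨hx, hgx⟩, rfl⟩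
  refine (hC.prod hC').induction_on
    (p := fun A => {g : G | ∃ q ∈ A, g • q.1 = q.2}.Finite) (by simp)
    (fun A A' hA hA' => hA'.subset fun g ⟨q, hq, h⟩ => ⟨q, hA hq, h⟩)
    (fun A A' hA hA' => (hA.union hA').subset ?_) ?_
  · rintro g ⟨q, hq | hq, h⟩
    exacts [Or.inl ⟨q, hq, h⟩, Or.inr ⟨q, hq, h⟩]
  · rintro ⟨x, x'⟩ -
    suffices ∃ A ∈ 𝓝 (x, x'), {g : G | ∃ q ∈ A, g • q.1 = q.2}.Finite from
      let ⟨A, hA, h⟩ := this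
      ⟨A, mem_nhdsWithin_of_mem_nhds hA, h⟩
    by_cases h : Z.proj x = Z.proj x'
    · let i := Z.indexAt x.1
      have hx : x.1 ∈ Z.baseSet i := Z.mem_baseSet_at _
      have hx' : x'.1 ∈ Z.baseSet i := by
        have h' : x.1 = x'.1 := h
        rwa [← h']
      refine ⟨_, prod_mem_nhds (eventually_localTriv_snd_eq hx) (eventually_localTriv_snd_eq hx'),
        Set.Subsingleton.finite ?_⟩
      have key : ∀ g : G, (∃ q ∈ {y : Z.TotalSpace | (Z.localTriv i y).2 = (Z.localTriv i x).2} ×ˢ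
          {y : Z.TotalSpace | (Z.localTriv i y).2 = (Z.localTriv i x').2}, g • q.1 = q.2) →
          g = (Z.localTriv i x').2 * ((Z.localTriv i x).2)⁻¹ := by
        rintro g ⟨q, ⟨hq, hq'⟩, hgq⟩
        rw [mem_ofPred_eq] at hq hq'
        rw [← hq, ← hq', ← hgq, localTriv_smul hZ, mul_inv_cancel_right]
      intro g hg g' hg'
      rw [key g hg, key g' hg']
    · obtain ⟨V, V', hV, hV', hx, hx', hVV'⟩ := t2_separation h
      refine ⟨(Z.proj ⁻¹' V) ×ˢ (Z.proj ⁻¹' V'), prod_mem_nhds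
        ((hV.preimage Z.continuous_proj).mem_nhds hx)
        ((hV'.preimage Z.continuous_proj).mem_nhds hx'), ?_⟩
      convert Set.finite_empty
      rw [eq_empty_iff_forall_notMem]
      rintro g ⟨q, ⟨hq, hq'⟩, hgq⟩
      have : Z.proj q.2 = Z.proj q.1 := by rw [← hgq]; rfl
      exact hVV'.le_bot ⟨hq, by rw [mem_preimage, this] at hq'; exact hq'⟩

end FiberBundleCore

end PrincipalCore

namespace AlexanderSpanier

variable {X Y : Type*} [TopologicalSpace X] [TopologicalSpace Y]

theorem isOpenEmbedding_symm_comp (e : OpenPartialHomeomorph X Y) {f : ℂ → Y}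
    (hf : IsOpenEmbedding f) (h : range f ⊆ e.target) : IsOpenEmbedding (e.symm ∘ f) := by
  have h1 : ∀ z, f z ∈ e.target := fun z => h ⟨z, rfl⟩
  have hinj : Function.Injective (e.symm ∘ f) := fun z w hzw =>
    hf.injective (e.symm.injOn (h1 z) (h1 w) hzw)
  refine IsOpenEmbedding.of_continuous_injective_isOpenMap
    (continuous_iff_continuousAt.2 fun z =>
      (e.continuousAt_symm (h1 z)).comp hf.continuous.continuousAt) hinj fun U hU => ?_
  rw [image_comp]
  exact e.isOpen_image_symm_of_subset_target (hf.isOpenMap U hU)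
    ((image_subset_range _ _).trans h)

theorem LocallyPlane.of_isLocalHomeomorph (hY : LocallyPlane Y) {p : X → Y}
    (hp : IsLocalHomeomorph p) : LocallyPlane X := by
  intro x
  obtain ⟨e, hx, rfl⟩ := hp x
  obtain ⟨f, hf, hf0, hfe⟩ := hY.exists_range_subset (e.open_target.mem_nhds (e.map_source hx))
  exact ⟨e.symm ∘ f, isOpenEmbedding_symm_comp e hf hfe, by simp [hf0, e.left_inv hx]⟩

theorem locallyPlane_of_chartedSpace [ChartedSpace (EuclideanSpace ℝ (Fin 2)) X] :
    LocallyPlane X := by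
  intro x
  let e : OpenPartialHomeomorph X ℂ := (chartAt (EuclideanSpace ℝ (Fin 2)) x).transHomeomorph
    Complex.orthonormalBasisOneI.repr.toHomeomorph.symm
  have hx : x ∈ e.source := mem_chart_source _ x
  obtain ⟨r, hr, hre⟩ := Metric.isOpen_iff.1 e.open_target _ (e.map_source hx)
  obtain ⟨g, hg, hg0, hgr⟩ := exists_openEmbedding_ball (e x) hr
  exact ⟨e.symm ∘ g, isOpenEmbedding_symm_comp e hg (hgr.trans_subset hre), by
    simp [hg0, e.left_inv hx]⟩

theorem LocallyPlane.locallyPathConnectedSpace (hX : LocallyPlane X) :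
    LocallyPathConnectedSpace X := by
  choose f hf hf0 using hX
  let _ : ChartedSpace ℂ X :=
    { atlas := univ
      chartAt := fun x => ((hf x).toOpenPartialHomeomorph (f x)).symm
      mem_chart_source := fun x => by simpa using ⟨0, hf0 x⟩
      chart_mem_atlas := fun _ => trivial }
  exact ChartedSpace.locallyPathConnectedSpace ℂ X

end AlexanderSpanier

namespace Path.Homotopic.Quotient

variable {X : Type*} [TopologicalSpace X] {x y z : X}

theorem trans_left_cancel (p : Path.Homotopic.Quotient x y) {q r : Path.Homotopic.Quotient y z}
    (h : p.trans q = p.trans r) : q = r := by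
  have h1 := congrArg (trans p.symm) h
  rwa [← trans_assoc, ← trans_assoc, symm_trans, refl_trans, refl_trans] at h1

theorem trans_right_cancel {p q : Path.Homotopic.Quotient x y} (r : Path.Homotopic.Quotient y z)
    (h : p.trans r = q.trans r) : p = q := by
  have h1 := congrArg (fun s => trans s r.symm) h
  simpa only [trans_assoc, trans_symm, trans_refl] using h1

theorem trans_symm_trans (p : Path.Homotopic.Quotient x y) (q : Path.Homotopic.Quotient x z) :
    p.trans (p.symm.trans q) = q := by
  rw [← trans_assoc, trans_symm, refl_trans]

end Path.Homotopic.Quotient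

theorem LocallyPathConnectedSpace.eventually_exists_path {X : Type*} [TopologicalSpace X]
    [LocallyPathConnectedSpace X] {y : X} {V : Set X} (hV : V ∈ 𝓝 y) :
    ∀ᶠ z in 𝓝 y, ∃ γ : Path y z, ∀ t, γ t ∈ V := by
  obtain ⟨W, ⟨hW, hWc⟩, hWV⟩ := (path_connected_basis y).mem_iff.1 hV
  filter_upwards [hW] with z hz
  have h := hWc.joinedIn y (mem_of_mem_nhds hW) z hz
  exact ⟨h.somePath, fun t => hWV (h.somePath_mem t)⟩

instance : SimplyConnectedSpace unitInterval :=
  have : ContractibleSpace unitInterval := (convex_Icc 0 1).contractibleSpace ⟨0, by simp⟩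
  inferInstance

instance : LocallyPathConnectedSpace unitInterval :=
  (isQuotientMap_projIcc (a := (0 : ℝ)) (b := 1) (h := zero_le_one)).locallyPathConnectedSpace

/-- An open cover, indexed by the points of the space, by path-connected sets in which any two
paths with the same end points are homotopic in the ambient space. -/
structure SimpleCover (X : Type*) [TopologicalSpace X] where
  /-- The members of the cover. -/
  nbhd : X → Set X
  isOpen_nbhd : ∀ i, IsOpen (nbhd i)
  mem_nbhd : ∀ i, i ∈ nbhd i
  isPathConnected_nbhd : ∀ i, IsPathConnected (nbhd i)
  homotopic : ∀ i ⦃a b : X⦄ (γ γ' : Path a b), (∀ t, γ t ∈ nbhd i) → (∀ t, γ' t ∈ nbhd i) →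
    γ.Homotopic γ'

namespace SimpleCover

open Path.Homotopic.Quotient

variable {X : Type*} [TopologicalSpace X] [PathConnectedSpace X] (𝒰 : SimpleCover X) (s : X)

open Classical in
/-- The class of a path from `y` to the base point that first runs inside `𝒰.nbhd i` to `i` and
then follows a path depending only on `i`. -/
noncomputable def toBase (i y : X) : Path.Homotopic.Quotient y s :=
  if h : y ∈ 𝒰.nbhd i then
    (Path.Homotopic.Quotient.mk
      ((𝒰.isPathConnected_nbhd i).joinedIn y h i (𝒰.mem_nbhd i)).somePath).trans
      (Path.Homotopic.Quotient.mk (PathConnectedSpace.somePath i s))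
  else Path.Homotopic.Quotient.mk (PathConnectedSpace.somePath y s)

theorem toBase_eq_trans {i y z : X} (γ : Path y z) (hγ : ∀ t, γ t ∈ 𝒰.nbhd i) :
    𝒰.toBase s i y = (Path.Homotopic.Quotient.mk γ).trans (𝒰.toBase s i z) := by
  have hy : y ∈ 𝒰.nbhd i := by simpa using hγ 0
  have hz : z ∈ 𝒰.nbhd i := by simpa using hγ 1
  rw [toBase, toBase, dif_pos hy, dif_pos hz, ← trans_assoc, ← mk_trans γ]
  congr 1
  refine Path.Homotopic.Quotient.eq.2 (𝒰.homotopic i _ _ (JoinedIn.somePath_mem _) fun t => ?_)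
  have h := γ.trans_range
    ((𝒰.isPathConnected_nbhd i).joinedIn z hz i (𝒰.mem_nbhd i)).somePath
  have ht := h.subset (mem_range_self t)
  rcases ht with ⟨u, hu⟩ | ⟨u, hu⟩
  · rw [← hu]; exact hγ u
  · rw [← hu]; exact JoinedIn.somePath_mem _ u

/-- The transition functions of the universal covering. -/
noncomputable def transition (i j y : X) : FundamentalGroup X s :=
  FundamentalGroup.fromPath ((𝒰.toBase s j y).symm.trans (𝒰.toBase s i y))

theorem toBase_trans_transition (i j y : X) :
    (𝒰.toBase s j y).trans (𝒰.transition s i j y).toPath = 𝒰.toBase s i y :=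
  trans_symm_trans _ _

variable [LocallyPathConnectedSpace X]

theorem eventually_transition_eq (i j : X) {y : X} (hy : y ∈ 𝒰.nbhd i ∩ 𝒰.nbhd j) :
    ∀ᶠ z in 𝓝 y, 𝒰.transition s i j z = 𝒰.transition s i j y := by
  filter_upwards [LocallyPathConnectedSpace.eventually_exists_path
    (((𝒰.isOpen_nbhd i).inter (𝒰.isOpen_nbhd j)).mem_nhds hy)] with z ⟨γ, hγ⟩
  refine trans_left_cancel (𝒰.toBase s j y) ?_
  rw [𝒰.toBase_trans_transition, 𝒰.toBase_eq_trans s γ fun t => (hγ t).2, trans_assoc,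
    𝒰.toBase_trans_transition, ← 𝒰.toBase_eq_trans s γ fun t => (hγ t).1]

variable [TopologicalSpace (FundamentalGroup X s)] [DiscreteTopology (FundamentalGroup X s)]

/-- The universal covering as a principal bundle of the fundamental group. -/
noncomputable def core : FiberBundleCore X X (FundamentalGroup X s) :=
  .ofCocycle 𝒰.nbhd 𝒰.isOpen_nbhd id 𝒰.mem_nbhd (𝒰.transition s)
    (fun i j _ => 𝒰.eventually_transition_eq s i j)
    (fun i y _ => symm_trans (𝒰.toBase s i y))
    (fun i j k y _ => trans_left_cancel (𝒰.toBase s k y) (by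
      rw [FundamentalGroup.mul_def, ← trans_assoc]
      erw [𝒰.toBase_trans_transition, 𝒰.toBase_trans_transition, 𝒰.toBase_trans_transition]))

theorem isPrincipal_core : (𝒰.core s).IsPrincipal := fun _ _ _ _ _ => mul_assoc _ _ _

/-- The homotopy class of paths to the base point encoded by a point of the universal covering. -/
noncomputable def label (x : (𝒰.core s).TotalSpace) : Path.Homotopic.Quotient x.1 s :=
  (𝒰.toBase s x.1 x.1).trans (show FundamentalGroup X s from x.2).toPath

theorem label_eq (i : X) (x : (𝒰.core s).TotalSpace) : 𝒰.label s x =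
    (𝒰.toBase s i x.1).trans ((𝒰.core s).localTriv i x).2.toPath := by
  rw [FiberBundleCore.localTriv_apply]
  change _ = (𝒰.toBase s i x.1).trans
    ((𝒰.transition s x.1 i x.1).toPath.trans (show FundamentalGroup X s from x.2).toPath)
  rw [← trans_assoc, 𝒰.toBase_trans_transition]
  rfl

theorem isLocallyConstant_map_trans_label (F : C(unitInterval, (𝒰.core s).TotalSpace))
    (hcont : Continuous fun t => (F t).1) :
    IsLocallyConstant fun t =>
      ((Path.Homotopic.Quotient.mk (PathConnectedSpace.somePath 0 t)).map
        ⟨fun t => (F t).1, hcont⟩).trans (𝒰.label s (F t)) := by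
  rw [IsLocallyConstant.iff_eventually_eq]
  intro t
  let i := (F t).1
  have hi : (F t).1 ∈ 𝒰.nbhd i := 𝒰.mem_nbhd i
  have h1 : ∀ᶠ u in 𝓝 t, ((𝒰.core s).localTriv i (F u)).2 = ((𝒰.core s).localTriv i (F t)).2 :=
    F.continuous.continuousAt.eventually
      (FiberBundleCore.eventually_localTriv_snd_eq (Z := 𝒰.core s) hi)
  have h2 : (fun u => (F u).1) ⁻¹' 𝒰.nbhd i ∈ 𝓝 t :=
    hcont.continuousAt.preimage_mem_nhds ((𝒰.isOpen_nbhd i).mem_nhds hi)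
  filter_upwards [h1, LocallyPathConnectedSpace.eventually_exists_path h2] with u hu ⟨γ, hγ⟩
  have h3 : Path.Homotopic.Quotient.mk (PathConnectedSpace.somePath 0 u) =
      (Path.Homotopic.Quotient.mk (PathConnectedSpace.somePath 0 t)).trans
        (Path.Homotopic.Quotient.mk γ) := Subsingleton.elim _ _
  rw [h3, 𝒰.label_eq s i, 𝒰.label_eq s i, hu,
    𝒰.toBase_eq_trans s (γ.map hcont) hγ, ← mk_trans, ← mk_map, Path.map_trans, mk_trans,
    trans_assoc, trans_assoc]
  rfl

theorem label_eq_trans {x y : (𝒰.core s).TotalSpace} (Γ : Path x y) :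
    𝒰.label s x =
      (Path.Homotopic.Quotient.mk (Γ.map (𝒰.core s).continuous_proj)).trans (𝒰.label s y) := by
  obtain ⟨F, rfl, rfl⟩ := Γ
  have hcont : Continuous fun t => (F t).1 := (𝒰.core s).continuous_proj.comp F.continuous
  have h := (𝒰.isLocallyConstant_map_trans_label s F hcont).apply_eq_of_preconnectedSpace 0 1
  have h0 : Path.Homotopic.Quotient.mk (PathConnectedSpace.somePath (0 : unitInterval) 0) =
    Path.Homotopic.Quotient.refl 0 := Subsingleton.elim _ _
  have h1 : Path.Homotopic.Quotient.mk (PathConnectedSpace.somePath (0 : unitInterval) 1) =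
    Path.Homotopic.Quotient.mk ⟨.id _, rfl, rfl⟩ := Subsingleton.elim _ _
  rw [h0, h1] at h
  exact (refl_trans _).symm.trans h

theorem simplyConnectedSpace_totalSpace : SimplyConnectedSpace (𝒰.core s).TotalSpace := by
  have hcov := (𝒰.core s).isCoveringMap_proj
  rw [simply_connected_iff_paths_homotopic]
  refine ⟨?_, fun x y => ⟨fun Γ Γ' => ?_⟩⟩
  · let x₀ : (𝒰.core s).TotalSpace := ⟨s, FundamentalGroup.fromPath (𝒰.toBase s s s).symm⟩
    have key : ∀ x : (𝒰.core s).TotalSpace, Joined x x₀ := by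
      intro x
      obtain ⟨γ, hγ⟩ := Path.Homotopic.Quotient.mk_surjective (𝒰.label s x)
      obtain ⟨Γ, hΓ, hΓx⟩ := hcov.exists_path_lifts γ x γ.source
      generalize hy : Γ 1 = y
      obtain ⟨y, g⟩ := y
      obtain rfl : y = s := by
        have := congrFun hΓ 1
        rw [Function.comp_apply, hy] at this
        exact this.trans γ.target
      have h1 := 𝒰.label_eq_trans y (⟨Γ, hΓx, hy⟩ : Path x _)
      have h2 : (⟨Γ, hΓx, hy⟩ : Path x ⟨y, g⟩).map (𝒰.core y).continuous_proj = γ := by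
        ext t
        exact congrFun hΓ t
      rw [h2, ← hγ] at h1
      have h3 : Path.Homotopic.Quotient.refl y = 𝒰.label y ⟨y, g⟩ :=
        trans_left_cancel (.mk γ) ((trans_refl _).trans h1)
      have h4 : (show FundamentalGroup X y from g) = (𝒰.toBase y y y).symm :=
        trans_left_cancel (𝒰.toBase y y y) (h3.symm.trans (trans_symm _).symm)
      obtain rfl : g = (𝒰.toBase y y y).symm := h4
      exact ⟨⟨Γ, hΓx, hy⟩⟩
    have : Nonempty (𝒰.core s).TotalSpace := ⟨x₀⟩
    exact ⟨this, fun x y => (key x).trans (key y).symm⟩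
  · refine hcov.injective_path_homotopic_map x y ?_
    obtain ⟨Γ, rfl⟩ := Path.Homotopic.Quotient.mk_surjective Γ
    obtain ⟨Γ', rfl⟩ := Path.Homotopic.Quotient.mk_surjective Γ'
    exact trans_right_cancel (𝒰.label s y)
      ((𝒰.label_eq_trans s Γ).symm.trans (𝒰.label_eq_trans s Γ'))

end SimpleCover

namespace AlexanderSpanier

variable {X : Type*} [TopologicalSpace X]

theorem exists_path_map_eq {f : ℂ → X} (hf : IsOpenEmbedding f) {z w : ℂ} (γ : Path (f z) (f w))
    (hγ : ∀ t, γ t ∈ range f) : ∃ γ' : Path z w, γ'.map hf.continuous = γ := by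
  choose u hu using hγ
  have hcont : Continuous u := by
    rw [hf.isEmbedding.continuous_iff]
    exact γ.continuous.congr fun t => (hu t).symm
  refine ⟨⟨⟨u, hcont⟩, hf.injective ?_, hf.injective ?_⟩, ?_⟩
  · simpa using hu 0
  · simpa using hu 1
  · ext t
    exact hu t

theorem LocallyPlane.nonempty_simpleCover (hX : LocallyPlane X) : Nonempty (SimpleCover X) := by
  choose f hf hf0 using hX
  refine ⟨⟨fun i => range (f i), fun i => (hf i).isOpen_range, fun i => ⟨0, hf0 i⟩,
    fun i => isPathConnected_range (hf i).continuous, fun i a b γ γ' hγ hγ' => ?_⟩⟩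
  obtain ⟨z, rfl⟩ : a ∈ range (f i) := by simpa using hγ 0
  obtain ⟨w, rfl⟩ : b ∈ range (f i) := by simpa using hγ 1
  obtain ⟨γ, rfl⟩ := exists_path_map_eq (hf i) γ hγ
  obtain ⟨γ', rfl⟩ := exists_path_map_eq (hf i) γ' hγ'
  exact (SimplyConnectedSpace.paths_homotopic γ γ').map ⟨f i, (hf i).continuous⟩

/-- The fundamental group of a closed surface has no almost invariant function separating the two
ends of an infinite cyclic subgroup. -/
theorem LocallyPlane.false_of_almostInvariant [CompactSpace X] [ConnectedSpace X] [T2Space X]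
    (hX : LocallyPlane X) (s : X) (e : FundamentalGroup X s → ZMod 2)
    (he : ∀ k, {g | e (g * k) ≠ e g}.Finite) (t : FundamentalGroup X s)
    (ht₁ : ∀ n : ℤ, 0 < n → e (t ^ n) = 1) (ht₀ : ∀ n : ℤ, n ≤ 0 → e (t ^ n) = 0) : False := by
  have := hX.locallyPathConnectedSpace
  have := hX.locallyCompactSpace
  have : PathConnectedSpace X := pathConnectedSpace_iff_connectedSpace.2 inferInstance
  obtain ⟨𝒰⟩ := hX.nonempty_simpleCover
  let _ : TopologicalSpace (FundamentalGroup X s) := ⊥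
  have : DiscreteTopology (FundamentalGroup X s) := ⟨rfl⟩
  let Z := 𝒰.core s
  have hZ : Z.IsPrincipal := 𝒰.isPrincipal_core s
  have : SimplyConnectedSpace Z.TotalSpace := 𝒰.simplyConnectedSpace_totalSpace s
  have : T2Space Z.TotalSpace := FiberBundleCore.t2Space
  have hZX : LocallyPlane Z.TotalSpace :=
    hX.of_isLocalHomeomorph Z.isCoveringMap_proj.isLocalHomeomorph
  have := hZX.locallyPathConnectedSpace
  have := FiberBundleCore.continuousConstSMul hZ
  obtain ⟨C, hC, hCX⟩ := FiberBundleCore.exists_isCompact_forall_smul_mem hZ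
  exact AlexanderSpanier.false_of_almostInvariant hZX exists_primitive
    (fun _ _ => FiberBundleCore.finite_setOf_smul_mem hZ) hC hCX e he t ht₁ ht₀

end AlexanderSpanier

/-- The fundamental group of a closed surface is not isomorphic to a free product of
two non-trivial groups. -/
theorem fundamentalGroup_closedSurface_not_free_product
    (S : Type) [TopologicalSpace S] [CompactSpace S] [ConnectedSpace S] [T2Space S]
    [ChartedSpace (EuclideanSpace ℝ (Fin 2)) S] (s : S)
    (G H : Type) [Group G] [Group H] [Nontrivial G] [Nontrivial H] :
    IsEmpty (FundamentalGroup S s ≃* Monoid.Coprod G H) := by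
  refine ⟨fun φ => ?_⟩
  obtain ⟨e, t, he, ht₁, ht₀⟩ := Monoid.Coprod.exists_almostInvariant G H
  refine (AlexanderSpanier.locallyPlane_of_chartedSpace (X := S)).false_of_almostInvariant s
    (fun g => e (φ g)) (fun k => ?_) (φ.symm t) (fun n hn => ?_) (fun n hn => ?_)
  · simpa only [map_mul, preimage_ofPred_eq] using (he (φ k)).preimage φ.injective.injOn
  · simpa only [map_zpow, φ.apply_symm_apply] using ht₁ n hn
  · simpa only [map_zpow, φ.apply_symm_apply] using ht₀ n hn
end

section
/- Let X be a path-connected, locally simply connected metric space containing a local cut point that is not a cut point. Then there exists a group G such that π₁(X) is isomorphic to G * ℤ. -/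
/-- Locally simply connected: every point has arbitrarily small simply connected
open neighborhoods. -/
def LocSimplyConnected (X : Type) [TopologicalSpace X] : Prop :=
  ∀ x : X, ∀ U ∈ nhds x, ∃ V ∈ nhds x, V ⊆ U ∧ IsOpen V ∧ SimplyConnectedSpace ↥V

/-- A cut point of a connected space: removing it disconnects the space. -/
def IsCutPoint (X : Type) [TopologicalSpace X] (x : X) : Prop :=
  ¬ IsPreconnected ({x}ᶜ : Set X)

/-- A local cut point: it disconnects some connected open neighborhood of itself. -/
def IsLocalCutPoint (X : Type) [TopologicalSpace X] (x : X) : Prop :=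
  ∃ U : Set X, IsOpen U ∧ x ∈ U ∧ IsConnected U ∧ ¬ IsPreconnected (U \ {x})

open Set Topology unitInterval

open Monoid.Coprod in
/-- A coaction `Φ` of the infinite cyclic group `⟨s⟩` on `Γ`, in the sense of free products, for
which some element `t` satisfies `Φ t = s * t` exhibits `⟨t⟩` as an infinite cyclic free factor
of `Γ`. -/
theorem nonempty_mulEquiv_coprod_int {Γ : Type*} [Group Γ]
    (Φ : Γ →* Monoid.Coprod Γ (Multiplicative ℤ)) (t : Γ)
    (hid : (Monoid.Coprod.lift (MonoidHom.id Γ) (zpowersHom Γ 1)).comp Φ = MonoidHom.id Γ)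
    (hcomp : ∀ u, (Monoid.Coprod.lift Φ (zpowersHom _ u)).comp Φ =
      (Monoid.Coprod.lift Monoid.Coprod.inl
        (zpowersHom _ (u * Monoid.Coprod.inr (Multiplicative.ofAdd 1)))).comp Φ)
    (ht : Φ t = Monoid.Coprod.inr (Multiplicative.ofAdd 1) * Monoid.Coprod.inl t) :
    ∃ G : Subgroup Γ, Nonempty (Γ ≃* Monoid.Coprod G (Multiplicative ℤ)) := by
  set ev : Γ → (Monoid.Coprod Γ (Multiplicative ℤ) →* Γ) :=
    fun a => lift (MonoidHom.id Γ) (zpowersHom Γ a) with hev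
  set ρ : Γ →* Γ := (ev t⁻¹).comp Φ with hρ
  have hΦρ : Φ.comp ρ = Monoid.Coprod.inl.comp ρ := by
    have h := hcomp (Φ t⁻¹)
    rw [map_inv, ht, mul_inv_rev, inv_mul_cancel_right, ← map_inv] at h
    have h₁ : Φ.comp (ev t⁻¹) =
        lift Φ (zpowersHom _ ((inl t)⁻¹ * (inr (Multiplicative.ofAdd 1))⁻¹)) := by
      apply Monoid.Coprod.hom_ext
      · rfl
      · ext; simp [hev, ht]
    have h₂ : (inl : Γ →* Monoid.Coprod Γ (Multiplicative ℤ)).comp (ev t⁻¹) =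
        lift inl (zpowersHom _ (inl t⁻¹)) := by
      apply Monoid.Coprod.hom_ext
      · rfl
      · ext; simp [hev]
    rw [hρ, ← MonoidHom.comp_assoc, ← MonoidHom.comp_assoc, h₁, h₂, ← h, map_inv]
  have hρρ : ∀ g, ρ (ρ g) = ρ g := fun g => by
    have := DFunLike.congr_fun hΦρ g
    simp only [MonoidHom.comp_apply] at this
    calc ρ (ρ g) = ev t⁻¹ (Φ (ρ g)) := rfl
      _ = ρ g := by rw [this]; rfl
  have hρt : ρ t = 1 := by simp [hρ, hev, ht]
  have hback : (lift ρ (zpowersHom Γ t)).comp Φ = MonoidHom.id Γ := by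
    have h₁ : lift ρ (zpowersHom Γ t) = (ev t⁻¹).comp (lift Φ (zpowersHom _ (inl t))) := by
      apply Monoid.Coprod.hom_ext
      · rfl
      · ext; simp [hev]
    have h₂ : (ev t⁻¹).comp (lift Monoid.Coprod.inl
        (zpowersHom _ (inl t * Monoid.Coprod.inr (Multiplicative.ofAdd 1)))) = ev 1 := by
      apply Monoid.Coprod.hom_ext
      · rfl
      · ext; simp [hev]
    rw [h₁, MonoidHom.comp_assoc, hcomp, ← MonoidHom.comp_assoc, h₂, ← hid]
  refine ⟨ρ.range, ⟨MonoidHom.toMulEquiv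
    ((Monoid.Coprod.map ρ.rangeRestrict (MonoidHom.id _)).comp Φ)
    (lift ρ.range.subtype (zpowersHom Γ t)) ?_ ?_⟩⟩
  · rw [← MonoidHom.comp_assoc, ← hback]
    congr 1
    apply Monoid.Coprod.hom_ext <;> rfl
  · apply Monoid.Coprod.hom_ext
    · ext ⟨_, g, rfl⟩ : 1
      have := DFunLike.congr_fun hΦρ g
      simp only [MonoidHom.comp_apply] at this
      simp only [MonoidHom.comp_apply, lift_apply_inl, Subgroup.subtype_apply, this, map_apply_inl,
        MonoidHom.id_apply]
      congr 1
      exact Subtype.ext (hρρ g)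
    · ext
      have : ρ.rangeRestrict t = 1 := Subtype.ext hρt
      simp [ht, this]

/-- A property of homotopy classes of paths that is stable under concatenation and holds for paths
contained in a member of an open family holds for every path covered by the family. -/
theorem Path.Homotopic.Quotient.induction_of_open_cover {X ι : Type*} [TopologicalSpace X]
    {U : ι → Set X} (hU : ∀ i, IsOpen (U i))
    {P : ∀ {y z : X}, Path.Homotopic.Quotient y z → Prop}
    (hlocal : ∀ i {y z : X} (γ : Path y z), (∀ t, γ t ∈ U i) → P (.mk γ))
    (htrans : ∀ {y z w : X} (γ : Path.Homotopic.Quotient y z) (δ : Path.Homotopic.Quotient z w),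
      P γ → P δ → P (γ.trans δ))
    {y z : X} (γ : Path y z) (hγ : ∀ t, ∃ i, γ t ∈ U i) : P (.mk γ) := by
  obtain ⟨t, ht0, htm, ⟨n, hn⟩, ht⟩ := exists_monotone_Icc_subset_open_cover_unitInterval
    (c := fun i => γ ⁻¹' U i) (fun i => (hU i).preimage γ.continuous)
    (fun s _ => mem_iUnion.2 (hγ s))
  have key : ∀ k, P (.mk (γ.subpath 0 (t k))) := by
    intro k
    induction k with
    | zero =>
      obtain ⟨i, hi⟩ := hγ 0
      rw [ht0, Path.subpath_self]
      exact hlocal i _ fun _ => hi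
    | succ k ih =>
      rw [← Path.Homotopic.Quotient.eq.2 ⟨Path.Homotopy.subpathTransSubpath γ 0 (t k) (t (k + 1))⟩,
        Path.Homotopic.Quotient.mk_trans]
      refine htrans _ _ ih ?_
      obtain ⟨i, hi⟩ := ht k
      refine hlocal i _ fun s => ?_
      have : γ.subpath (t k) (t (k + 1)) s ∈ range (γ.subpath (t k) (t (k + 1))) := mem_range_self s
      rw [Path.range_subpath_of_le _ _ _ (htm k.le_succ)] at this
      obtain ⟨r, hr, hr'⟩ := this
      exact hr' ▸ hi hr
  have h := key n
  rw [hn n le_rfl, Path.subpath_zero_one] at h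
  obtain ⟨γ, rfl, rfl⟩ := γ
  exact h

/-- A multiplicative transport along homotopy classes of paths of `X` with values in a group,
that is, a functor from the fundamental groupoid to a group. -/
structure PathHom (X H : Type*) [TopologicalSpace X] [Group H] where
  /-- The value on a homotopy class of paths. -/
  toFun : ∀ {y z : X}, Path.Homotopic.Quotient y z → H
  map_trans : ∀ {y z w : X} (γ : Path.Homotopic.Quotient y z) (δ : Path.Homotopic.Quotient z w),
    toFun (γ.trans δ) = toFun δ * toFun γ

/-- Local potentials `e i` on the members `U i` of an open cover whose quotients are locally
constant on overlaps are integrated by a multiplicative transport; it is the monodromy of the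
covering space with fibre `H` which they define. -/
theorem PathHom.exists_of_local_potential {X H ι : Type*} [TopologicalSpace X] [Group H]
    {U : ι → Set X} (hU : ∀ i, IsOpen (U i)) (hcov : ∀ y, ∃ i, y ∈ U i) (e : ι → X → H)
    (he : ∀ i j, ∀ y ∈ U i ∩ U j, ∀ᶠ z in 𝓝 y, (e j z)⁻¹ * e i z = (e j y)⁻¹ * e i y) :
    ∃ M : PathHom X H, ∀ i {y z : X} (γ : Path y z), (∀ t, γ t ∈ U i) →
      M.toFun (.mk γ) = e i z * (e i y)⁻¹ := by
  choose ind hind using hcov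
  let _ : TopologicalSpace H := ⊥
  have : DiscreteTopology H := ⟨rfl⟩
  let Z : FiberBundleCore ι X H :=
    { baseSet := U
      isOpen_baseSet := hU
      indexAt := ind
      mem_baseSet_at := hind
      coordChange := fun i j y h => (e j y)⁻¹ * e i y * h
      coordChange_self := fun i y _ h => by simp
      continuousOn_coordChange := fun i j => by
        rintro ⟨y, h⟩ ⟨hy, -⟩
        refine ContinuousAt.continuousWithinAt ?_
        have h₁ : ContinuousAt (fun z => (e j z)⁻¹ * e i z) y :=
          continuousAt_const.congr ((he i j y hy).mono fun z hz => hz.symm)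
        exact (h₁.comp (f := Prod.fst) (x := (y, h)) continuousAt_fst).mul continuousAt_snd
      coordChange_comp := fun i j k y _ h => by group }
  have cov : IsCoveringMap (Bundle.TotalSpace.proj : Bundle.TotalSpace H Z.Fiber → X) :=
    FiberBundle.isCoveringMap
  let lift : X → H → Bundle.TotalSpace H Z.Fiber := fun y h => ⟨y, (e (ind y) y)⁻¹ * h⟩
  let pt : ∀ y : X, H → (Bundle.TotalSpace.proj : Bundle.TotalSpace H Z.Fiber → X) ⁻¹' {y} :=
    fun y h => ⟨lift y h, rfl⟩
  have hpt : ∀ y, Function.Injective (pt y) := fun y h k hk => by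
    have h₁ : lift y h = lift y k := congrArg Subtype.val hk
    have h₂ : (e (ind y) y)⁻¹ * h = (e (ind y) y)⁻¹ * k := Bundle.TotalSpace.mk_inj.1 h₁
    exact mul_left_cancel h₂
  have hloc : ∀ i {y z : X} (γ : Path y z), (∀ t, γ t ∈ U i) → ∀ h,
      cov.monodromy (.mk γ) (pt y h) = pt z (e i z * (e i y)⁻¹ * h) := by
    intro i y z γ hγ h
    let Γ : Path (pt y h).1 (pt z (e i z * (e i y)⁻¹ * h)).1 :=
      { toFun := fun t => lift (γ t) (e i (γ t) * ((e i y)⁻¹ * h))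
        continuous_toFun := by
          have h₁ : Continuous fun t =>
              (Z.localTriv i).toOpenPartialHomeomorph.symm (γ t, (e i y)⁻¹ * h) := by
            refine (Z.localTriv i).toOpenPartialHomeomorph.continuousOn_symm.comp_continuous
              (by fun_prop) fun t => ?_
            rw [(Z.localTriv i).mem_target]
            exact hγ t
          exact h₁.congr fun t => congrArg (Bundle.TotalSpace.mk (γ t))
            (mul_assoc (G := H) (e (ind (γ t)) (γ t))⁻¹ (e i (γ t)) ((e i y)⁻¹ * h))
        source' := by
          rw [γ.source, mul_inv_cancel_left]
        target' := by
          rw [γ.target, ← mul_assoc] }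
    refine cov.monodromy_eq_of_map_eq (.mk Γ) ?_
    rw [← Path.Homotopic.Quotient.mk_map]
    rfl
  have hex : ∀ {y z : X} (γ : Path.Homotopic.Quotient y z),
      ∃ m : H, ∀ h, cov.monodromy γ (pt y h) = pt z (m * h) := by
    intro y z γ
    induction γ using Path.Homotopic.Quotient.ind with
    | mk γ =>
    refine Path.Homotopic.Quotient.induction_of_open_cover hU
      (P := fun {y z} γ => ∃ m : H, ∀ h, cov.monodromy γ (pt y h) = pt z (m * h))
      (fun i y z γ hγ => ⟨_, hloc i γ hγ⟩) ?_ γ (fun t => ⟨_, hind _⟩)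
    rintro y z w γ δ ⟨m, hm⟩ ⟨n, hn⟩
    exact ⟨n * m, fun h => by rw [cov.monodromy_trans_apply, hm, hn, mul_assoc]⟩
  choose m hm using @hex
  refine ⟨⟨fun γ => m γ, fun {y z w} γ δ => ?_⟩, fun i y z γ hγ => ?_⟩
  · have h := hm (γ.trans δ) 1
    rw [cov.monodromy_trans_apply, hm, hm] at h
    simpa using (hpt _ h).symm
  · have h := hm (.mk γ) 1
    rw [hloc i γ hγ] at h
    simpa using (hpt _ h).symm

namespace PathHom

variable {X H K : Type*} [TopologicalSpace X] [Group H] [Group K]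

theorem map_refl (F : PathHom X H) (y : X) : F.toFun (.refl y) = 1 := by
  have h := F.map_trans (.refl y) (.refl y)
  rwa [Path.Homotopic.Quotient.refl_trans, left_eq_mul] at h

theorem map_symm (F : PathHom X H) {y z : X} (γ : Path.Homotopic.Quotient y z) :
    F.toFun γ.symm = (F.toFun γ)⁻¹ := by
  have h := F.map_trans γ γ.symm
  rw [Path.Homotopic.Quotient.trans_symm, map_refl] at h
  exact eq_inv_of_mul_eq_one_left h.symm

/-- Composition of a multiplicative transport with a group homomorphism. -/
def map (F : PathHom X H) (φ : H →* K) : PathHom X K where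
  toFun γ := φ (F.toFun γ)
  map_trans γ δ := by rw [F.map_trans, φ.map_mul]

/-- The change of a multiplicative transport by a gauge transformation. -/
def gauge (F : PathHom X H) (g : X → H) : PathHom X H where
  toFun {y z} γ := g z * F.toFun γ * (g y)⁻¹
  map_trans γ δ := by rw [F.map_trans]; group

/-- The homomorphism on the fundamental group given by a multiplicative transport. -/
noncomputable def toMonoidHom (F : PathHom X H) (x : X) : FundamentalGroup X x →* H :=
  MonoidHom.mk' (fun γ => F.toFun (FundamentalGroup.toPath γ)) fun γ δ => F.map_trans δ γ

/-- The transport with values in the fundamental group obtained by closing up paths by means of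
chosen paths from the base point. -/
noncomputable def closeUp {x : X} (q : ∀ y, Path.Homotopic.Quotient x y) :
    PathHom X (FundamentalGroup X x) where
  toFun {y z} γ := FundamentalGroup.fromPath (((q y).trans γ).trans (q z).symm)
  map_trans {y z w} γ δ := by
    rw [FundamentalGroup.mul_def]
    simp only [Path.Homotopic.Quotient.trans_assoc]
    rw [← Path.Homotopic.Quotient.trans_assoc (q z).symm, Path.Homotopic.Quotient.symm_trans,
      Path.Homotopic.Quotient.refl_trans]

theorem closeUp_loop {x : X} (q : ∀ y, Path.Homotopic.Quotient x y) (hq : q x = .refl x)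
    (γ : Path.Homotopic.Quotient x x) :
    (closeUp q).toFun γ = FundamentalGroup.fromPath γ := by
  change ((q x).trans γ).trans (q x).symm = γ
  rw [hq, Path.Homotopic.Quotient.refl_trans, ← Path.Homotopic.Quotient.mk_refl,
    ← Path.Homotopic.Quotient.mk_symm, Path.refl_symm, Path.Homotopic.Quotient.mk_refl,
    Path.Homotopic.Quotient.trans_refl]

theorem map_closeUp_toMonoidHom (F : PathHom X H) {x : X}
    (q : ∀ y, Path.Homotopic.Quotient x y) {y z : X} (γ : Path.Homotopic.Quotient y z) :
    F.toMonoidHom x ((closeUp q).toFun γ) =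
      (F.toFun (q z))⁻¹ * F.toFun γ * F.toFun (q y) := by
  change F.toFun (((q y).trans γ).trans (q z).symm) = _
  rw [F.map_trans, F.map_trans, F.map_symm, mul_assoc]

/-- Two multiplicative transports agree on the paths covered by a family of path-connected open
sets as soon as they agree on the paths issuing from the centres of these sets. -/
theorem apply_eq_of_radial {M N : PathHom X H} {D : X → Set X} (hopen : ∀ p, IsOpen (D p))
    (hmem : ∀ p, p ∈ D p) (hD : ∀ p, IsPathConnected (D p)) {S : Set X}
    (h : ∀ p ∈ S, ∀ {z : X} (α : Path p z), (∀ t, α t ∈ D p) →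
      M.toFun (.mk α) = N.toFun (.mk α))
    {y z : X} (γ : Path y z) (hγ : ∀ t, ∃ p ∈ S, γ t ∈ D p) :
    M.toFun (.mk γ) = N.toFun (.mk γ) := by
  refine Path.Homotopic.Quotient.induction_of_open_cover (U := fun p : S => D p)
    (fun p => hopen p) (P := fun γ => M.toFun γ = N.toFun γ) ?_ ?_ γ
    (fun t => let ⟨p, hp, ht⟩ := hγ t; ⟨⟨p, hp⟩, ht⟩)
  · rintro ⟨p, hp⟩ y z γ hγ
    obtain ⟨β, hβ⟩ := (hD p).joinedIn p (hmem p) y (by simpa using hγ 0)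
    have h₁ := h p hp β hβ
    have h₂ := h p hp (β.trans γ) fun t => by
      have : β.trans γ t ∈ range (β.trans γ) := mem_range_self t
      rw [Path.trans_range] at this
      rcases this with ⟨s, hs⟩ | ⟨s, hs⟩
      · exact hs ▸ hβ s
      · exact hs ▸ hγ s
    rw [Path.Homotopic.Quotient.mk_trans, M.map_trans, N.map_trans, h₁] at h₂
    exact mul_right_cancel h₂
  · intro y z w γ δ h₁ h₂
    rw [M.map_trans, N.map_trans, h₁, h₂]

end PathHom

theorem Path.Homotopic.Quotient.mk_eq_of_forall_mem {X : Type*} [TopologicalSpace X] {V : Set X}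
    [SimplyConnectedSpace V] {y z : X} {γ δ : Path y z} (hγ : ∀ t, γ t ∈ V) (hδ : ∀ t, δ t ∈ V) :
    mk γ = mk δ := by
  have hy : y ∈ V := by simpa using hγ 0
  have hz : z ∈ V := by simpa using hγ 1
  let restrict : ∀ ε : Path y z, (∀ t, ε t ∈ V) → Path (⟨y, hy⟩ : V) ⟨z, hz⟩ := fun ε hε =>
    { toFun := fun t => ⟨ε t, hε t⟩
      continuous_toFun := by fun_prop
      source' := Subtype.ext ε.source
      target' := Subtype.ext ε.target }
  exact Path.Homotopic.Quotient.eq.2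
    ((SimplyConnectedSpace.paths_homotopic (restrict γ hγ) (restrict δ hδ)).map
      ⟨Subtype.val, continuous_subtype_val⟩)

/-- A transport on a simply connected set is the increment of a potential. -/
theorem PathHom.exists_potential {X H : Type*} [TopologicalSpace X] [Group H] (F : PathHom X H)
    (V : Set X) [SimplyConnectedSpace V] (p : X) :
    ∃ e : X → H, ∀ {z : X} (α : Path p z), (∀ t, α t ∈ V) → e z = F.toFun (.mk α) := by
  classical
  refine ⟨fun z => if h : ∃ α : Path p z, ∀ t, α t ∈ V then F.toFun (.mk h.choose) else 1,
    fun {z} α hα => ?_⟩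
  have h : ∃ α : Path p z, ∀ t, α t ∈ V := ⟨α, hα⟩
  beta_reduce
  rw [dif_pos h, Path.Homotopic.Quotient.mk_eq_of_forall_mem h.choose_spec hα]

open Classical in
/-- Let `x` have a simply connected neighbourhood `D x` in which `B` is one of the sides of `x`.
Every multiplicative transport can be modified by inserting `s` whenever a path passes from `B`
through `x` to the other side. -/
theorem PathHom.exists_twist {X H : Type*} [TopologicalSpace X] [LocallyPathConnectedSpace X]
    [Group H] (F : PathHom X H) (s : H) {D : X → Set X} (hopen : ∀ p, IsOpen (D p))
    (hmem : ∀ p, p ∈ D p) (hD : ∀ p, SimplyConnectedSpace (D p)) {x : X} {B : Set X}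
    (hxB : x ∉ B) (hB : ∀ y ∈ D x, y ≠ x → ∀ᶠ z in 𝓝 y, (z ∈ B ↔ y ∈ B))
    (hDx : ∀ p, p ≠ x → x ∉ D p) :
    ∃ M : PathHom X H,
      (∀ p, p ≠ x → ∀ {z : X} (α : Path p z), (∀ t, α t ∈ D p) →
        M.toFun (.mk α) = F.toFun (.mk α)) ∧
      ∀ {z : X} (α : Path x z), (∀ t, α t ∈ D x) →
        M.toFun (.mk α) = F.toFun (.mk α) * if z ∈ B then s⁻¹ else 1 := by
  choose pot hpot using fun p => F.exists_potential (D p) p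
  let c : X → X → H := fun p z => if p = x ∧ z ∈ B then s⁻¹ else 1
  have hc : ∀ p y, y ∈ D p → y ≠ x → ∀ᶠ z in 𝓝 y, c p z = c p y := by
    intro p y hy hyx
    by_cases hp : p = x
    · subst hp
      filter_upwards [hB y hy hyx] with z hz
      simp [c, hz]
    · simp [c, hp]
  have hadd : ∀ p {y z : X} (ν : Path y z), (∀ t, ν t ∈ D p) →
      pot p z = F.toFun (.mk ν) * pot p y := by
    intro p y z ν hν
    obtain ⟨β, hβ⟩ := (isPathConnected_iff_pathConnectedSpace.2
      (inferInstance : PathConnectedSpace (D p))).joinedIn p (hmem p) y (by simpa using hν 0)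
    rw [hpot p β hβ, ← F.map_trans, ← Path.Homotopic.Quotient.mk_trans]
    refine hpot p _ fun t => ?_
    have : β.trans ν t ∈ range (β.trans ν) := mem_range_self t
    rw [Path.trans_range] at this
    rcases this with ⟨r, hr⟩ | ⟨r, hr⟩
    · exact hr ▸ hβ r
    · exact hr ▸ hν r
  have he : ∀ p q, ∀ y ∈ D p ∩ D q, ∀ᶠ z in 𝓝 y,
      (pot q z * c q z)⁻¹ * (pot p z * c p z) = (pot q y * c q y)⁻¹ * (pot p y * c p y) := by
    rintro p q y ⟨hyp, hyq⟩
    by_cases hpq : p = q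
    · subst hpq
      simp
    have hyx : y ≠ x := by
      rintro rfl
      by_cases hp : p = y
      · exact hDx q (fun hq => hpq (hp.trans hq.symm)) hyq
      · exact hDx p hp hyp
    obtain ⟨N, ⟨hN, hNpc⟩, hNsub⟩ := (LocallyPathConnectedSpace.path_connected_basis y).mem_iff.1
      (((hopen p).inter (hopen q)).mem_nhds ⟨hyp, hyq⟩)
    filter_upwards [hN, hc p y hyp hyx, hc q y hyq hyx] with z hz hzp hzq
    obtain ⟨ν, hν⟩ := hNpc.joinedIn y (mem_of_mem_nhds hN) z hz
    rw [hadd p ν fun t => (hNsub (hν t)).1, hadd q ν fun t => (hNsub (hν t)).2, hzp, hzq]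
    group
  obtain ⟨M, hM⟩ := PathHom.exists_of_local_potential hopen (fun y => ⟨y, hmem y⟩)
    (fun p z => pot p z * c p z) he
  have hM' : ∀ p {z : X} (α : Path p z), (∀ t, α t ∈ D p) →
      M.toFun (.mk α) = F.toFun (.mk α) * c p z := by
    intro p z α hα
    have hp : pot p p = 1 := by
      rw [hpot p (Path.refl p) fun _ => hmem p, Path.Homotopic.Quotient.mk_refl, F.map_refl]
    have hcp : c p p = 1 := by
      simp only [c]
      exact if_neg (by rintro ⟨rfl, h⟩; exact hxB h)
    rw [hM p α hα, hp, hcp, hpot p α hα]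
    simp
  refine ⟨M, fun p hp z α hα => ?_, fun {z} α hα => ?_⟩
  · simp [hM' p α hα, c, hp]
  · simp [hM' x α hα, c]

open Classical in
/-- If the two sides of `x` in its simply connected neighbourhood `D x` are joined by a path
avoiding `x`, then the fundamental group has an infinite cyclic free factor. -/
theorem exists_mulEquiv_coprod_int_of_joinedIn_compl {X : Type*} [TopologicalSpace X]
    [PathConnectedSpace X] [LocallyPathConnectedSpace X] {D : X → Set X}
    (hopen : ∀ p, IsOpen (D p)) (hmem : ∀ p, p ∈ D p) (hD : ∀ p, SimplyConnectedSpace (D p))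
    {x : X} {B : Set X} (hxB : x ∉ B)
    (hB : ∀ y ∈ D x, y ≠ x → ∀ᶠ z in 𝓝 y, (z ∈ B ↔ y ∈ B)) (hDx : ∀ p, p ≠ x → x ∉ D p)
    {a b : X} (ha : a ∈ D x) (haB : a ∉ B) (hb : b ∈ D x) (hbB : b ∈ B)
    (hab : JoinedIn {x}ᶜ a b) :
    ∃ G : Subgroup (FundamentalGroup X x),
      Nonempty (FundamentalGroup X x ≃* Monoid.Coprod G (Multiplicative ℤ)) := by
  have hDpc : ∀ p, IsPathConnected (D p) := fun p =>
    isPathConnected_iff_pathConnectedSpace.2 inferInstance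
  let q : ∀ y, Path.Homotopic.Quotient x y := fun y =>
    (Path.Homotopic.Quotient.mk (PathConnectedSpace.somePath x x)).symm.trans
      (.mk (PathConnectedSpace.somePath x y))
  have hq : q x = .refl x := Path.Homotopic.Quotient.symm_trans _
  let F := PathHom.closeUp q
  have hF : ∀ γ : FundamentalGroup X x, F.toFun (FundamentalGroup.toPath γ) = γ :=
    PathHom.closeUp_loop q hq
  let s : Monoid.Coprod (FundamentalGroup X x) (Multiplicative ℤ) :=
    Monoid.Coprod.inr (Multiplicative.ofAdd 1)
  obtain ⟨M, hM, hMx⟩ := (F.map Monoid.Coprod.inl).exists_twist s hopen hmem hD hxB hB hDx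
  have hext : ∀ {K : Type _} [Group K] (P Q : PathHom X K),
      (∀ p {z : X} (α : Path p z), (∀ t, α t ∈ D p) → P.toFun (.mk α) = Q.toFun (.mk α)) →
      ∀ γ : FundamentalGroup X x,
        P.toFun (FundamentalGroup.toPath γ) = Q.toFun (FundamentalGroup.toPath γ) := by
    intro K _ P Q h γ
    obtain ⟨γ, rfl⟩ := Path.Homotopic.Quotient.mk_surjective γ
    exact PathHom.apply_eq_of_radial hopen hmem hDpc (S := univ) (fun p _ => h p) γ
      fun t => ⟨γ t, mem_univ _, hmem _⟩
  obtain ⟨α, hα⟩ := (hDpc x).joinedIn x (hmem x) a ha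
  obtain ⟨β, hβ⟩ := (hDpc x).joinedIn x (hmem x) b hb
  obtain ⟨η, hη⟩ := hab
  refine nonempty_mulEquiv_coprod_int (M.toMonoidHom x)
    (FundamentalGroup.fromPath (((Path.Homotopic.Quotient.mk α).trans (.mk η)).trans
      (Path.Homotopic.Quotient.mk β).symm)) ?_ (fun u => ?_) ?_
  · ext γ
    refine (hext (M.map (Monoid.Coprod.lift (MonoidHom.id _) (zpowersHom _ 1))) F
      (fun p z ε hε => ?_) γ).trans (hF γ)
    by_cases hp : p = x
    · subst hp
      change Monoid.Coprod.lift _ _ (M.toFun _) = _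
      rw [hMx ε hε]
      simp only [PathHom.map, s, map_mul, apply_ite (Monoid.Coprod.lift _ _), map_inv, map_one,
        Monoid.Coprod.lift_apply_inl, Monoid.Coprod.lift_apply_inr, zpowersHom_apply, one_zpow,
        inv_one, ite_self, mul_one, MonoidHom.id_apply]
    · change Monoid.Coprod.lift _ _ (M.toFun _) = _
      rw [hM p hp ε hε]
      simp [PathHom.map]
  · ext γ
    have hgx : M.toFun (q x) = 1 := by rw [hq, M.map_refl]
    refine (hext (M.map (Monoid.Coprod.lift (M.toMonoidHom x) (zpowersHom _ u)))
      ((M.map (Monoid.Coprod.lift Monoid.Coprod.inl (zpowersHom _ (u * s)))).gauge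
        fun z => (M.toFun (q z))⁻¹) (fun p z ε hε => ?_) γ).trans ?_
    · change Monoid.Coprod.lift _ _ (M.toFun _) =
        (M.toFun (q z))⁻¹ * Monoid.Coprod.lift _ _ (M.toFun _) * (M.toFun (q p))⁻¹⁻¹
      by_cases hp : p = x
      · subst hp
        have h := M.map_closeUp_toMonoidHom q (.mk ε)
        rw [hMx ε hε] at h ⊢
        simp only [PathHom.map, map_mul, Monoid.Coprod.lift_apply_inl, h, F, hgx]
        split_ifs <;> simp [s, mul_assoc]
      · have h := M.map_closeUp_toMonoidHom q (.mk ε)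
        rw [hM p hp ε hε] at h ⊢
        simp only [PathHom.map, Monoid.Coprod.lift_apply_inl, h, F, inv_inv]
    · change (M.toFun (q x))⁻¹ * _ * (M.toFun (q x))⁻¹⁻¹ = _
      rw [hgx, inv_one, inv_one, one_mul, mul_one]
      rfl
  · have hη' : M.toFun (.mk η) = (F.map Monoid.Coprod.inl).toFun (.mk η) :=
      PathHom.apply_eq_of_radial hopen hmem hDpc (S := {x}ᶜ) (fun p hp _ α hα => hM p hp α hα) η
        fun t => ⟨η t, hη t, hmem _⟩
    change M.toFun (((Path.Homotopic.Quotient.mk α).trans (.mk η)).trans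
      (Path.Homotopic.Quotient.mk β).symm) = _
    conv_rhs => rw [← hF (FundamentalGroup.fromPath _)]
    change _ = s * (F.map Monoid.Coprod.inl).toFun (((Path.Homotopic.Quotient.mk α).trans
      (.mk η)).trans (Path.Homotopic.Quotient.mk β).symm)
    rw [M.map_trans, M.map_trans, M.map_symm, PathHom.map_trans, PathHom.map_trans,
      PathHom.map_symm, hη', hMx α hα, hMx β hβ, if_neg haB, if_pos hbB]
    group

/-- If `x` disconnects a connected neighbourhood `U`, then both sides of `x` in `U` accumulate
at `x`. -/
theorem IsPreconnected.inter_nonempty_of_separation {X : Type*} [TopologicalSpace X] [T1Space X]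
    {U u v V : Set X} {x : X} (hU : IsPreconnected U) (hUo : IsOpen U) (hu : IsOpen u)
    (hv : IsOpen v) (huv : U \ {x} ⊆ u ∪ v) (hne : (U \ {x} ∩ u).Nonempty)
    (hdisj : ¬ (U \ {x} ∩ (u ∩ v)).Nonempty) (hVo : IsOpen V) (hxV : x ∈ V) (hVU : V ⊆ U) :
    (V \ {x} ∩ u).Nonempty := by
  by_contra hV
  obtain ⟨y, ⟨hyU, hyx⟩, hyu⟩ := hne
  obtain ⟨z, hzU, ⟨⟨-, hzx⟩, hzu⟩, hz⟩ := hU ((U \ {x}) ∩ u) ((U \ {x}) ∩ v ∪ V)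
    ((hUo.sdiff isClosed_singleton).inter hu) (((hUo.sdiff isClosed_singleton).inter hv).union hVo)
    (fun z hz => by
      by_cases hzx : z = x
      · exact .inr (.inr (hzx ▸ hxV))
      · exact (huv ⟨hz, hzx⟩).imp (fun h => ⟨⟨hz, hzx⟩, h⟩) fun h => .inl ⟨⟨hz, hzx⟩, h⟩)
    ⟨y, hyU, ⟨hyU, hyx⟩, hyu⟩ ⟨x, hVU hxV, .inr hxV⟩
  rcases hz with hz | hz
  · exact hdisj ⟨z, ⟨hzU, hzx⟩, hzu, hz.2⟩
  · exact hV ⟨z, ⟨hz, hzx⟩, hzu⟩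

theorem LocSimplyConnected.locallyPathConnectedSpace {X : Type} [TopologicalSpace X]
    (hX : LocSimplyConnected X) : LocallyPathConnectedSpace X where
  path_connected_basis y := by
    refine Filter.hasBasis_self.2 fun U hU => ?_
    obtain ⟨V, hV, hVU, -, hVs⟩ := hX y U hU
    exact ⟨V, hV, isPathConnected_iff_pathConnectedSpace.2 inferInstance, hVU⟩

/-- If a path-connected, locally simply connected metric space has a local cut point
which is not a cut point, then its fundamental group splits as `G * ℤ` for some
group `G`. -/
theorem fundamentalGroup_splits_of_local_cut_point
    (X : Type) [MetricSpace X] [PathConnectedSpace X] (hX : LocSimplyConnected X)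
    (x : X) (hloc : IsLocalCutPoint X x) (hnot : ¬ IsCutPoint X x) (x₀ : X) :
    ∃ (G : Type) (g : Group G), letI := g;
      Nonempty (FundamentalGroup X x₀ ≃* Monoid.Coprod G (Multiplicative ℤ)) := by
  have := hX.locallyPathConnectedSpace
  obtain ⟨U, hUo, hxU, hUc, hsep⟩ := hloc
  simp only [IsPreconnected, not_forall] at hsep
  obtain ⟨u, v, hu, hv, huv, hneu, hnev, hdisj⟩ := hsep
  have hD : ∀ p, ∃ D : Set X, p ∈ D ∧ IsOpen D ∧ SimplyConnectedSpace D ∧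
      (p = x → D ⊆ U) ∧ (p ≠ x → x ∉ D) := by
    intro p
    by_cases hp : p = x
    · obtain ⟨V, hV, hVU, hVo, hVs⟩ := hX p U (hUo.mem_nhds (hp ▸ hxU))
      exact ⟨V, mem_of_mem_nhds hV, hVo, hVs, fun _ => hVU, fun h => absurd hp h⟩
    · obtain ⟨V, hV, hVx, hVo, hVs⟩ := hX p {x}ᶜ (isOpen_compl_singleton.mem_nhds hp)
      exact ⟨V, mem_of_mem_nhds hV, hVo, hVs, fun h => absurd h hp, fun _ h => hVx h rfl⟩
  choose D hmem hopen hsc hDU hDx using hD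
  obtain ⟨a, ⟨haD, hax⟩, hau⟩ := hUc.isPreconnected.inter_nonempty_of_separation hUo hu hv huv hneu
    hdisj (hopen x) (hmem x) (hDU x rfl)
  obtain ⟨b, ⟨hbD, hbx⟩, hbv⟩ := hUc.isPreconnected.inter_nonempty_of_separation hUo hv hu
    (union_comm u v ▸ huv) hnev (inter_comm u v ▸ hdisj) (hopen x) (hmem x) (hDU x rfl)
  have hpc : IsPathConnected ({x}ᶜ : Set X) :=
    isOpen_compl_singleton.isConnected_iff_isPathConnected.1 ⟨⟨a, hax⟩, not_not.1 hnot⟩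
  have hB : ∀ y ∈ D x, y ≠ x → ∀ᶠ z in 𝓝 y, (z ∈ v \ {x} ↔ y ∈ v \ {x}) := by
    intro y hy hyx
    have hyU : y ∈ U \ {x} := ⟨hDU x rfl hy, hyx⟩
    have hUx : IsOpen (U \ {x}) := hUo.sdiff isClosed_singleton
    rcases huv hyU with h | h
    · filter_upwards [hu.mem_nhds h, hUx.mem_nhds hyU] with z hzu hzU
      exact ⟨fun hz => (hdisj ⟨z, hzU, hzu, hz.1⟩).elim, fun hz => (hdisj ⟨y, hyU, h, hz.1⟩).elim⟩
    · filter_upwards [hv.mem_nhds h, hUx.mem_nhds hyU] with z hzv hzU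
      exact ⟨fun _ => ⟨h, hyx⟩, fun _ => ⟨hzv, hzU.2⟩⟩
  obtain ⟨G, ⟨e⟩⟩ := exists_mulEquiv_coprod_int_of_joinedIn_compl hopen hmem hsc
    (B := v \ {x}) (fun h => h.2 rfl) hB hDx haD
    (fun h => hdisj ⟨a, ⟨hDU x rfl haD, hax⟩, hau, h.1⟩) hbD ⟨hbv, hbx⟩ (hpc.joinedIn a hax b hbx)
  exact ⟨G, inferInstance,
    ⟨(FundamentalGroup.fundamentalGroupMulEquivOfPathConnected x₀ x).trans e⟩⟩
end
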